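/- arXiv:2505.06130 — 3 statements merged into one kernel-verified Lean document; each statement's English description precedes it below -/
import Mathlib

section
/- Let k, l, m ≥ 2 be integers with 1/k + 1/l + 1/m < 1. Then M_{PSL₂(ℝ)} = {1, -1} as a subset of the unit group of ℤ/lcm(k,l,m)ℤ. -/
/-!
The nontrivial elements of finite order in `PSL(2, ℝ)` that matter here are the rotations of angle
`π x / k`, taken modulo `π`. The proof has two halves.

Geometry (`conjProdOne_iff`): for angles `t₁, t₂, t₃ ∈ (0, π)`, some conjugates of the three
rotations multiply to `1` exactly when `t₁ + t₂ + t₃ ≤ π` or `t₁ + t₂ + t₃ ≥ 2π`. A hyperbolic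
triangle (or a point, in case of equality) provides the conjugates; conversely, the trace and the
orientation of a product of two elliptic elements leave no other possibility. Hence an element of
`M` represented by `ρ` preserves the set of triples of nonzero residues `(x, y, z)` modulo
`k, l, m` whose fractional parts `{x/k} + {y/l} + {z/m}` have sum at most `1` or at least `2`
(`Good`). As some positive power of `ρ` is `1`, it also reflects this property
(`pres_of_mem_MSet`).

Arithmetic (`Pres.dvd_all`): for `k ≥ 3` the hypothesis `1/k + 1/l + 1/m < 1` gives `y, z` with
`1/k < {y/l} + {z/m} ≤ 1 - 1/k` (`exists_mid`). The residues `x` for which `(x, y, z)` is good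
then form an interval `1, …, T` with `1 ≤ T ≤ k - 2`, which multiplication by `ρ` or `-ρ` maps
onto an interval of the same form, hence onto itself; this forces `±ρ ≡ 1` modulo `k`
(`dvd_sub_one_of_interval`). By symmetry `ρ ≡ ±1` modulo each of `k, l, m`. Testing the triple
`(1, y, z)` shows that the signs can be chosen equal (`Pres.sign`).

That `1` and `-1` belong to `M` holds in any group: `cde = 1` implies that some conjugates of
`c⁻¹, d⁻¹, e⁻¹` have product `1` (`ConjProdOne.inv`).
-/

open scoped MatrixGroups

/-- `C` is a conjugacy class of `G`. -/
def IsConjClass {G : Type*} [Group G] (C : Set G) : Prop :=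
  ∃ x : G, C = {y | IsConj x y}

/-- The set `B_G` of triples `(C,D,E)` of conjugacy classes of `G` with `1 ∈ CDE`,
`C ⊆ G[k]⁰`, `D ⊆ G[l]⁰`, `E ⊆ G[m]⁰`. -/
def BSet (k l m : ℕ) (G : Type*) [Group G] : Set (Set G × Set G × Set G) :=
  {T | IsConjClass T.1 ∧ IsConjClass T.2.1 ∧ IsConjClass T.2.2 ∧
    (∃ c ∈ T.1, ∃ d ∈ T.2.1, ∃ e ∈ T.2.2, c * d * e = 1) ∧
    T.1 ⊆ {g | g ^ k = 1 ∧ g ≠ 1} ∧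
    T.2.1 ⊆ {g | g ^ l = 1 ∧ g ≠ 1} ∧
    T.2.2 ⊆ {g | g ^ m = 1 ∧ g ≠ 1}}

/-- The set `M_G` of units `r` of `ℤ/lcm(k,l,m)ℤ` such that `(C^r, D^r, E^r) ∈ B_G`
for every `(C,D,E) ∈ B_G`. -/
def MSet (k l m n : ℕ) (G : Type*) [Group G] : Set (ZMod n)ˣ :=
  {r | ∀ ρ : ℤ, ((ρ : ZMod n) = (r : ZMod n)) → ∀ T ∈ BSet k l m G,
    ((fun c => c ^ ρ) '' T.1, (fun d => d ^ ρ) '' T.2.1, (fun e => e ^ ρ) '' T.2.2)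
      ∈ BSet k l m G}

/-! ### Rotations in `PSL(2, ℝ)` and their products -/

/-- The rotation matrix of angle `θ`. -/
noncomputable def rotSL (θ : ℝ) : SL(2, ℝ) :=
  ⟨!![Real.cos θ, -Real.sin θ; Real.sin θ, Real.cos θ], by
    rw [Matrix.det_fin_two_of]; nlinarith [Real.sin_sq_add_cos_sq θ]⟩

/-- The class of the rotation matrix of angle `θ`; it depends on `θ` modulo `π` only. -/
noncomputable def rot (θ : ℝ) : PSL(2, ℝ) := QuotientGroup.mk (rotSL θ)

lemma rotSL_add (θ φ : ℝ) : rotSL (θ + φ) = rotSL θ * rotSL φ := by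
  ext i j
  rw [Matrix.SpecialLinearGroup.coe_mul]
  fin_cases i <;> fin_cases j <;>
    simp [rotSL, Matrix.mul_apply, Fin.sum_univ_two, Real.cos_add, Real.sin_add] <;> ring

lemma rot_add (θ φ : ℝ) : rot (θ + φ) = rot θ * rot φ := by
  simp only [rot, rotSL_add]; rfl

lemma SL2_center (A : SL(2, ℝ)) (hA : A ∈ Subgroup.center SL(2, ℝ)) :
    A = 1 ∨ A = -1 := by
  rw [Matrix.SpecialLinearGroup.mem_center_iff] at hA
  obtain ⟨r, hr, h⟩ := hA
  rw [Fintype.card_fin] at hr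
  rcases (by simpa using hr : r = 1 ∨ r = -1) with rfl | rfl
  · left; ext i j; rw [← h]; simp
  · right; ext i j; rw [← h]; fin_cases i <;> fin_cases j <;> simp

lemma neg_one_mem_center : (-1 : SL(2, ℝ)) ∈ Subgroup.center SL(2, ℝ) := by
  rw [Subgroup.mem_center_iff]; intro g; simp

lemma mk_eq_iff (A B : SL(2, ℝ)) :
    (QuotientGroup.mk A : PSL(2, ℝ)) = QuotientGroup.mk B ↔ A = B ∨ A = -B := by
  rw [eq_comm, QuotientGroup.eq]
  constructor
  · intro h
    rcases SL2_center _ h with h | h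
    · left; exact (inv_mul_eq_one.1 h).symm
    · right; rw [inv_mul_eq_iff_eq_mul] at h; rw [h]; simp
  · rintro (rfl | rfl)
    · simp
    · simpa using neg_one_mem_center

lemma rot_zero : rot 0 = 1 := by
  have : rotSL 0 = 1 := by
    ext i j; fin_cases i <;> fin_cases j <;> simp [rotSL]
  rw [rot, this]; rfl

lemma rot_pi : rot Real.pi = 1 := by
  have : rotSL Real.pi = -1 := by
    ext i j; fin_cases i <;> fin_cases j <;> simp [rotSL]
  exact (mk_eq_iff _ 1).2 (Or.inr this)

/-- `rot` as a homomorphism from the additive group of angles. -/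
noncomputable def rotHom : Multiplicative ℝ →* PSL(2, ℝ) where
  toFun θ := rot θ.toAdd
  map_one' := rot_zero
  map_mul' _ _ := rot_add _ _

lemma rot_zpow (θ : ℝ) (n : ℤ) : rot θ ^ n = rot (n * θ) := by
  have := map_zpow rotHom (Multiplicative.ofAdd θ) n
  rw [← ofAdd_zsmul, zsmul_eq_mul] at this
  exact this.symm

lemma rot_int_mul_pi (n : ℤ) : rot (n * Real.pi) = 1 := by
  rw [← rot_zpow, rot_pi, one_zpow]

lemma rot_ne_one {θ : ℝ} (h0 : 0 < θ) (h1 : θ < Real.pi) : rot θ ≠ 1 := by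
  intro h
  have hs := Real.sin_pos_of_pos_of_lt_pi h0 h1
  rcases (mk_eq_iff _ 1).1 h with h | h
  · have := congrArg (fun A : SL(2, ℝ) => A 1 0) h
    simp [rotSL] at this; linarith
  · have := congrArg (fun A : SL(2, ℝ) => A 1 0) h
    simp [rotSL] at this; linarith

/-- Conjugates of a rotation are `cos θ + sin θ • K`, where `K` is a complex structure on `ℝ²`
with the standard orientation. -/
lemma conj_entries (g : SL(2, ℝ)) (θ : ℝ) : ∃ x y z : ℝ, 0 < y ∧ 0 < z ∧ y * z = 1 + x ^ 2 ∧
    ((g * rotSL θ * g⁻¹ : SL(2, ℝ)) : Matrix (Fin 2) (Fin 2) ℝ) =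
      !![Real.cos θ + Real.sin θ * x, - (Real.sin θ * y);
        Real.sin θ * z, Real.cos θ - Real.sin θ * x] := by
  have hd := g.det_coe
  rw [Matrix.det_fin_two] at hd
  set a := (g : Matrix (Fin 2) (Fin 2) ℝ) 0 0 with ha
  set b := (g : Matrix (Fin 2) (Fin 2) ℝ) 0 1 with hb
  set c := (g : Matrix (Fin 2) (Fin 2) ℝ) 1 0 with hc
  set d := (g : Matrix (Fin 2) (Fin 2) ℝ) 1 1 with hd'
  have hyz : (a ^ 2 + b ^ 2) * (c ^ 2 + d ^ 2) = 1 + (b * d + a * c) ^ 2 := by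
    linear_combination (a * d - b * c + 1) * hd
  have hy : 0 < a ^ 2 + b ^ 2 := by
    rcases (by positivity : 0 ≤ a ^ 2 + b ^ 2).lt_or_eq with h | h
    · exact h
    · rw [← h] at hyz; nlinarith [sq_nonneg (b * d + a * c)]
  have hz : 0 < c ^ 2 + d ^ 2 := by
    rcases (by positivity : 0 ≤ c ^ 2 + d ^ 2).lt_or_eq with h | h
    · exact h
    · rw [← h] at hyz; nlinarith [sq_nonneg (b * d + a * c)]
  refine ⟨b * d + a * c, a ^ 2 + b ^ 2, c ^ 2 + d ^ 2, hy, hz, hyz, ?_⟩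
  rw [Matrix.SpecialLinearGroup.coe_mul, Matrix.SpecialLinearGroup.coe_mul,
    Matrix.SpecialLinearGroup.coe_inv, Matrix.adjugate_fin_two,
    Matrix.eta_fin_two (g : Matrix (Fin 2) (Fin 2) ℝ)]
  simp only [rotSL, ← ha, ← hb, ← hc, ← hd']
  ext i j
  fin_cases i <;> fin_cases j <;> simp [Matrix.mul_apply, Fin.sum_univ_two]
  · linear_combination Real.cos θ * hd
  · ring
  · ring
  · linear_combination Real.cos θ * hd

/-- For `sin θ > 0`, the elements conjugate to the rotation of angle `θ` are recognised by their trace and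
the sign of their lower left entry. -/
lemma isConj_rotSL (A : SL(2, ℝ)) (θ : ℝ) (hs : 0 < Real.sin θ)
    (ht : A 0 0 + A 1 1 = 2 * Real.cos θ) (hA : 0 < A 1 0) : IsConj (rotSL θ) A := by
  have hd := A.det_coe
  rw [Matrix.det_fin_two] at hd
  set x := (A 0 0 - Real.cos θ) / Real.sin θ with hx
  set z := A 1 0 / Real.sin θ with hz
  have hz0 : 0 < z := div_pos hA hs
  set q := Real.sqrt z with hq
  have hq0 : 0 < q := Real.sqrt_pos.2 hz0
  have hqq : q * q = z := Real.mul_self_sqrt hz0.le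
  have e00 : A 0 0 = Real.cos θ + Real.sin θ * x := by rw [hx]; field_simp; ring
  have e11 : A 1 1 = Real.cos θ - Real.sin θ * x := by rw [hx]; field_simp; linarith
  have e10 : A 1 0 = Real.sin θ * z := by rw [hz]; field_simp
  have e01 : A 0 1 * z = - (Real.sin θ * (1 + x ^ 2)) := by
    have h1 : Real.sin θ * (A 0 1 * z + Real.sin θ * (1 + x ^ 2)) = 0 := by
      rw [e00, e11, e10] at hd
      linear_combination -hd + Real.sin_sq_add_cos_sq θ
    rcases mul_eq_zero.1 h1 with h | h
    · exact absurd h hs.ne'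
    · linarith
  -- the affine map sending the fixed point `i` of the rotation to the fixed point of `A`
  let g : SL(2, ℝ) := ⟨!![1 / q, x / q; 0, q], by
    rw [Matrix.det_fin_two_of]; field_simp; ring⟩
  rw [isConj_iff]
  refine ⟨g, ?_⟩
  rw [mul_inv_eq_iff_eq_mul]
  have e01' : A 0 1 = - (Real.sin θ * (1 + x ^ 2)) / (q * q) := by
    rw [hqq, ← e01]; field_simp
  rw [← hqq] at e10
  ext i j
  rw [Matrix.SpecialLinearGroup.coe_mul, Matrix.SpecialLinearGroup.coe_mul]
  fin_cases i <;> fin_cases j <;>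
    simp [Matrix.mul_apply, Fin.sum_univ_two, g, rotSL, e00, e11, e10, e01'] <;> field_simp <;> ring

/-- The trigonometric obstruction: the three conjugates of rotations of angles `θ₁, θ₂, θ₃` can
only multiply to `±1` if the angle sum avoids `(π, 2π)`. The two equations compare, for the product
of the first two and `ε` times the inverse of the third, half the trace and half the difference of
the off-diagonal entries, whose sign is the sense of rotation. -/
lemma angle_sum_of_trace {t₁ t₂ t₃ w w' ε : ℝ} (h1 : 0 < t₁) (h1' : t₁ < Real.pi)
    (h2 : 0 < t₂) (h2' : t₂ < Real.pi) (h3 : 0 < t₃) (h3' : t₃ < Real.pi)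
    (hw : 1 ≤ w) (hw' : 1 ≤ w') (hε : ε = 1 ∨ ε = -1)
    (ht : Real.cos t₁ * Real.cos t₂ - w * (Real.sin t₁ * Real.sin t₂) = ε * Real.cos t₃)
    (hp : Real.sin t₁ * Real.cos t₂ + w * (Real.cos t₁ * Real.sin t₂) =
      - ε * (Real.sin t₃ * w')) :
    t₁ + t₂ + t₃ ≤ Real.pi ∨ 2 * Real.pi ≤ t₁ + t₂ + t₃ := by
  have s1 := Real.sin_pos_of_pos_of_lt_pi h1 h1'
  have s2 := Real.sin_pos_of_pos_of_lt_pi h2 h2'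
  have s3 := Real.sin_pos_of_pos_of_lt_pi h3 h3'
  have hle : ε * Real.cos t₃ ≤ Real.cos (t₁ + t₂) := by
    rw [← ht, Real.cos_add]; nlinarith [mul_pos s1 s2]
  have hsp : 0 < Real.sin t₃ * w' := by positivity
  have hid : Real.cos t₁ * (ε * Real.cos t₃) + Real.sin t₁ * (- ε * (Real.sin t₃ * w'))
      = Real.cos t₂ := by
    rw [← ht, ← hp]; linear_combination Real.cos t₂ * Real.sin_sq_add_cos_sq t₁
  have hsin : Real.sin (t₁ + t₂) + (w - 1) * (Real.cos t₁ * Real.sin t₂) =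
      - ε * (Real.sin t₃ * w') := by
    rw [← hp, Real.sin_add]; ring
  have c3 : Real.cos t₃ < 1 := by
    have := Real.cos_lt_cos_of_nonneg_of_le_pi le_rfl h3'.le h3
    simpa using this
  have c3' : -1 < Real.cos t₃ := by
    have := Real.cos_lt_cos_of_nonneg_of_le_pi h3.le le_rfl h3'
    simpa using this
  rcases hε with rfl | rfl
  · rw [one_mul] at hle
    rcases le_or_gt Real.pi (t₁ + t₂) with h | h
    · right
      by_contra hc
      push Not at hc
      have := Real.cos_lt_cos_of_nonneg_of_le_pi h3.le
        (by linarith : 2 * Real.pi - (t₁ + t₂) ≤ Real.pi) (by linarith)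
      rw [Real.cos_two_pi_sub] at this
      linarith
    · exfalso
      have hs := Real.sin_pos_of_pos_of_lt_pi (by linarith : 0 < t₁ + t₂) h
      have hc1 : Real.cos t₁ < 0 := by
        by_contra hc; push Not at hc
        have : 0 ≤ (w - 1) * (Real.cos t₁ * Real.sin t₂) :=
          mul_nonneg (by linarith) (by positivity)
        linarith
      have : Real.cos (Real.pi - t₁) < Real.cos t₂ :=
        Real.cos_lt_cos_of_nonneg_of_le_pi h2.le (by linarith) (by linarith)
      rw [Real.cos_pi_sub] at this
      nlinarith [mul_pos s1 hsp]
  · rcases le_or_gt (t₁ + t₂) Real.pi with h | h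
    · left
      by_contra hc
      push Not at hc
      have := Real.cos_lt_cos_of_nonneg_of_le_pi (by linarith : 0 ≤ Real.pi - t₃) h
        (by linarith)
      rw [Real.cos_pi_sub] at this
      linarith
    · exfalso
      have hs : Real.sin (t₁ + t₂) < 0 := by
        have := Real.sin_pos_of_pos_of_lt_pi (by linarith : 0 < t₁ + t₂ - Real.pi) (by linarith)
        rw [Real.sin_sub_pi] at this; linarith
      have hc1 : 0 < Real.cos t₁ := by
        by_contra hc; push Not at hc
        have : (w - 1) * (Real.cos t₁ * Real.sin t₂) ≤ 0 :=
          mul_nonpos_of_nonneg_of_nonpos (by linarith) (by nlinarith)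
        linarith
      have : Real.cos t₂ < Real.cos (Real.pi - t₁) :=
        Real.cos_lt_cos_of_nonneg_of_le_pi (by linarith) h2'.le (by linarith)
      rw [Real.cos_pi_sub] at this
      nlinarith [mul_pos s1 hsp]

lemma one_le_half_add {x y z : ℝ} (hy : 0 < y) (hz : 0 < z) (h : y * z = 1 + x ^ 2) :
    1 ≤ (y + z) / 2 := by
  nlinarith [sq_nonneg (y - z), sq_nonneg x, sq_nonneg (y + z - 2)]

/-- The existence of three conjugates of `x`, `y`, `z` with product `1`. -/
def ConjProdOne {G : Type*} [Group G] (x y z : G) : Prop :=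
  ∃ c d e, IsConj x c ∧ IsConj y d ∧ IsConj z e ∧ c * d * e = 1

lemma ConjProdOne.inv {G : Type*} [Group G] {x y z : G} (h : ConjProdOne x y z) :
    ConjProdOne x⁻¹ y⁻¹ z⁻¹ := by
  obtain ⟨c, d, e, hc, hd, he, h⟩ := h
  obtain ⟨u, rfl⟩ := isConj_iff.1 hc
  obtain ⟨v, rfl⟩ := isConj_iff.1 hd
  obtain ⟨w, rfl⟩ := isConj_iff.1 he
  set c := u * x * u⁻¹ with hcd
  set d := v * y * v⁻¹ with hdd
  set e := w * z * w⁻¹ with hed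
  refine ⟨c⁻¹, d⁻¹, d * e⁻¹ * d⁻¹, isConj_iff.2 ⟨u, by rw [hcd]; group⟩,
    isConj_iff.2 ⟨v, by rw [hdd]; group⟩, isConj_iff.2 ⟨d * w, by rw [hed]; group⟩, ?_⟩
  have h' : c = e⁻¹ * d⁻¹ := by
    rw [eq_inv_mul_iff_mul_eq, eq_inv_iff_mul_eq_one]
    have : e * (c * d * e) * e⁻¹ = 1 := by rw [h]; group
    rw [← this]; group
  rw [h']; group

lemma angle_sum_of_conjProdOne {t₁ t₂ t₃ : ℝ} (h1 : 0 < t₁) (h1' : t₁ < Real.pi)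
    (h2 : 0 < t₂) (h2' : t₂ < Real.pi) (h3 : 0 < t₃) (h3' : t₃ < Real.pi)
    (h : ConjProdOne (rot t₁) (rot t₂) (rot t₃)) :
    t₁ + t₂ + t₃ ≤ Real.pi ∨ 2 * Real.pi ≤ t₁ + t₂ + t₃ := by
  obtain ⟨c, d, e, hc, hd, he, h⟩ := h
  obtain ⟨u, rfl⟩ := isConj_iff.1 hc
  obtain ⟨v, rfl⟩ := isConj_iff.1 hd
  obtain ⟨w, rfl⟩ := isConj_iff.1 he
  have h' : rot t₁ * ((u⁻¹ * v) * rot t₂ * (u⁻¹ * v)⁻¹) =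
      ((u⁻¹ * w) * rot t₃ * (u⁻¹ * w)⁻¹)⁻¹ := by
    rw [eq_inv_iff_mul_eq_one]
    have : u⁻¹ * (u * rot t₁ * u⁻¹ * (v * rot t₂ * v⁻¹) * (w * rot t₃ * w⁻¹)) * u = 1 := by
      rw [h]; group
    rw [← this]; group
  obtain ⟨V, hV⟩ := QuotientGroup.mk_surjective (u⁻¹ * v)
  obtain ⟨W, hW⟩ := QuotientGroup.mk_surjective (u⁻¹ * w)
  rw [← hV, ← hW] at h'
  have h'' := (mk_eq_iff (rotSL t₁ * (V * rotSL t₂ * V⁻¹)) (W * rotSL t₃ * W⁻¹)⁻¹).1 h'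
  obtain ⟨x, y, z, hy, hz, hyz, hX⟩ := conj_entries V t₂
  obtain ⟨x', y', z', hy', hz', hyz', hX'⟩ := conj_entries W t₃
  obtain ⟨ε, hε, hm⟩ : ∃ ε : ℝ, (ε = 1 ∨ ε = -1) ∧
      !![Real.cos t₁, -Real.sin t₁; Real.sin t₁, Real.cos t₁] *
      !![Real.cos t₂ + Real.sin t₂ * x, - (Real.sin t₂ * y);
        Real.sin t₂ * z, Real.cos t₂ - Real.sin t₂ * x] =
      ε • !![Real.cos t₃ - Real.sin t₃ * x', (Real.sin t₃ * y');
        -(Real.sin t₃ * z'), Real.cos t₃ + Real.sin t₃ * x'] := by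
    rcases h'' with h | h
    · refine ⟨1, Or.inl rfl, ?_⟩
      have := congrArg (fun A : SL(2, ℝ) => (A : Matrix (Fin 2) (Fin 2) ℝ)) h
      simp only [Matrix.SpecialLinearGroup.coe_mul _ (_ * _),
        Matrix.SpecialLinearGroup.coe_inv (_ * _), hX, hX', Matrix.adjugate_fin_two_of] at this
      simpa [rotSL] using this
    · refine ⟨-1, Or.inr rfl, ?_⟩
      have := congrArg (fun A : SL(2, ℝ) => (A : Matrix (Fin 2) (Fin 2) ℝ)) h
      simp only [Matrix.SpecialLinearGroup.coe_mul _ (_ * _), Matrix.SpecialLinearGroup.coe_neg,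
        Matrix.SpecialLinearGroup.coe_inv (_ * _), hX, hX', Matrix.adjugate_fin_two_of] at this
      simpa [rotSL] using this
  have m00 := congrFun (congrFun hm 0) 0
  have m01 := congrFun (congrFun hm 0) 1
  have m10 := congrFun (congrFun hm 1) 0
  have m11 := congrFun (congrFun hm 1) 1
  simp [Matrix.mul_apply, Fin.sum_univ_two] at m00 m01 m10 m11
  refine angle_sum_of_trace h1 h1' h2 h2' h3 h3' (one_le_half_add hy hz hyz)
    (one_le_half_add hy' hz' hyz') hε ?_ ?_
  · linear_combination (m00 + m11) / 2
  · linear_combination (m10 - m01) / 2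

lemma conjProdOne_of_angle_sum_le {t₁ t₂ t₃ : ℝ} (h1 : 0 < t₁) (h2 : 0 < t₂) (h3 : 0 < t₃)
    (h : t₁ + t₂ + t₃ ≤ Real.pi) : ConjProdOne (rot t₁) (rot t₂) (rot t₃) := by
  have s1 := Real.sin_pos_of_pos_of_lt_pi h1 (by linarith)
  have s2 := Real.sin_pos_of_pos_of_lt_pi h2 (by linarith)
  have s3 := Real.sin_pos_of_pos_of_lt_pi h3 (by linarith)
  -- `w = (u + u⁻¹) / 2` is the hyperbolic cosine of the side between the first two fixed points,
  -- given by the hyperbolic law of cosines for a triangle of angles `t₁`, `t₂`, `t₃`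
  set w := (Real.cos t₁ * Real.cos t₂ + Real.cos t₃) / (Real.sin t₁ * Real.sin t₂) with hw
  have hwe : w * (Real.sin t₁ * Real.sin t₂) = Real.cos t₁ * Real.cos t₂ + Real.cos t₃ := by
    rw [hw]; field_simp
  have hw1 : 1 ≤ w := by
    rw [hw, le_div_iff₀ (by positivity), one_mul]
    have : Real.cos (Real.pi - (t₁ + t₂)) ≤ Real.cos t₃ :=
      Real.cos_le_cos_of_nonneg_of_le_pi h3.le (by linarith) (by linarith)
    rw [Real.cos_pi_sub, Real.cos_add] at this
    linarith
  obtain ⟨q, hq0, hq⟩ : ∃ q : ℝ, 0 < q ∧ q ^ 2 + (q ^ 2)⁻¹ = 2 * w := by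
    set u := w + Real.sqrt (w ^ 2 - 1) with hu
    have hr : Real.sqrt (w ^ 2 - 1) ^ 2 = w ^ 2 - 1 := Real.sq_sqrt (by nlinarith)
    have hu0 : 0 < u := by positivity
    refine ⟨Real.sqrt u, Real.sqrt_pos.2 hu0, ?_⟩
    rw [Real.sq_sqrt hu0.le]
    field_simp
    rw [hu]; linear_combination hr
  let g : SL(2, ℝ) := ⟨!![q, 0; 0, q⁻¹], by rw [Matrix.det_fin_two_of]; field_simp; ring⟩
  have hg : ((g * rotSL t₂ * g⁻¹ : SL(2, ℝ)) : Matrix (Fin 2) (Fin 2) ℝ) =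
      !![Real.cos t₂, - (Real.sin t₂ * q ^ 2); Real.sin t₂ * (q ^ 2)⁻¹, Real.cos t₂] := by
    rw [Matrix.SpecialLinearGroup.coe_mul, Matrix.SpecialLinearGroup.coe_mul,
      Matrix.SpecialLinearGroup.coe_inv, Matrix.adjugate_fin_two]
    ext i j
    fin_cases i <;> fin_cases j <;>
      simp [Matrix.mul_apply, Fin.sum_univ_two, g, rotSL] <;> field_simp
  set X := g * rotSL t₂ * g⁻¹ with hX
  set P := rotSL t₁ * X with hP
  have p00 : P 0 0 = Real.cos t₁ * Real.cos t₂ - Real.sin t₁ * (Real.sin t₂ * (q ^ 2)⁻¹) := by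
    rw [hP, Matrix.SpecialLinearGroup.coe_mul, hg]
    simp [Matrix.mul_apply, Fin.sum_univ_two, rotSL]; ring
  have p01 : P 0 1 = -(Real.cos t₁ * (Real.sin t₂ * q ^ 2)) - Real.sin t₁ * Real.cos t₂ := by
    rw [hP, Matrix.SpecialLinearGroup.coe_mul, hg]
    simp [Matrix.mul_apply, Fin.sum_univ_two, rotSL]; ring
  have p10 : P 1 0 = Real.sin t₁ * Real.cos t₂ + Real.cos t₁ * (Real.sin t₂ * (q ^ 2)⁻¹) := by
    rw [hP, Matrix.SpecialLinearGroup.coe_mul, hg]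
    simp [Matrix.mul_apply, Fin.sum_univ_two, rotSL]
  have p11 : P 1 1 = -(Real.sin t₁ * (Real.sin t₂ * q ^ 2)) + Real.cos t₁ * Real.cos t₂ := by
    rw [hP, Matrix.SpecialLinearGroup.coe_mul, hg]
    simp [Matrix.mul_apply, Fin.sum_univ_two, rotSL]
  have htr : P 0 0 + P 1 1 = -2 * Real.cos t₃ := by
    rw [p00, p11]
    linear_combination -(Real.sin t₁ * Real.sin t₂) * hq - 2 * hwe
  have hφ : 0 < P 1 0 - P 0 1 := by
    have e1 : P 1 0 - P 0 1 = 2 * (Real.sin t₁ * Real.cos t₂ + w * (Real.cos t₁ * Real.sin t₂)) := by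
      rw [p10, p01]
      linear_combination (Real.cos t₁ * Real.sin t₂) * hq
    have e2 : Real.sin t₁ * (P 1 0 - P 0 1) = 2 * (Real.cos t₂ + Real.cos t₁ * Real.cos t₃) := by
      rw [e1]
      linear_combination 2 * Real.cos t₁ * hwe + 2 * Real.cos t₂ * Real.sin_sq_add_cos_sq t₁
    rcases le_or_gt 0 (Real.cos t₁) with hc | hc
    · have hs := Real.sin_pos_of_pos_of_lt_pi (by linarith : 0 < t₁ + t₂) (by linarith)
      rw [Real.sin_add] at hs
      rw [e1]
      nlinarith [mul_nonneg hc s2.le]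
    · have : Real.cos (Real.pi - t₁) < Real.cos t₂ :=
        Real.cos_lt_cos_of_nonneg_of_le_pi h2.le (by linarith) (by linarith)
      rw [Real.cos_pi_sub] at this
      have : 0 < Real.sin t₁ * (P 1 0 - P 0 1) := by
        rw [e2]; nlinarith [Real.cos_le_one t₃]
      exact pos_of_mul_pos_right this s1.le
  have hdet := P.det_coe
  rw [Matrix.det_fin_two] at hdet
  -- `P` is elliptic, so its off-diagonal entries have opposite signs
  have hneg : P 0 1 * P 1 0 < 0 := by
    have h11 : P 1 1 = -2 * Real.cos t₃ - P 0 0 := by linarith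
    rw [h11] at hdet
    nlinarith [sq_nonneg (P 0 0 + Real.cos t₃), Real.sin_sq_add_cos_sq t₃, mul_pos s3 s3]
  have hpos : 0 < P 1 0 := by
    by_contra hc; push Not at hc
    nlinarith
  have hconj : IsConj (rotSL t₃) (-P⁻¹) := by
    apply isConj_rotSL _ _ s3
    · simp [Matrix.SpecialLinearGroup.coe_inv, Matrix.adjugate_fin_two]; linarith
    · simpa [Matrix.SpecialLinearGroup.coe_inv, Matrix.adjugate_fin_two] using hpos
  refine ⟨rot t₁, QuotientGroup.mk X, QuotientGroup.mk (-P⁻¹), IsConj.refl _, ?_, ?_, ?_⟩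
  · exact isConj_iff.2 ⟨QuotientGroup.mk g, rfl⟩
  · obtain ⟨k, hk⟩ := isConj_iff.1 hconj
    exact isConj_iff.2 ⟨QuotientGroup.mk k, by rw [← hk]; rfl⟩
  · have : (QuotientGroup.mk (rotSL t₁ * X * (-P⁻¹)) : PSL(2, ℝ)) = QuotientGroup.mk 1 := by
      rw [mk_eq_iff]; right
      rw [← hP]; simp
    exact this

lemma conjProdOne_iff {t₁ t₂ t₃ : ℝ} (h1 : 0 < t₁) (h1' : t₁ < Real.pi)
    (h2 : 0 < t₂) (h2' : t₂ < Real.pi) (h3 : 0 < t₃) (h3' : t₃ < Real.pi) :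
    ConjProdOne (rot t₁) (rot t₂) (rot t₃) ↔
      t₁ + t₂ + t₃ ≤ Real.pi ∨ 2 * Real.pi ≤ t₁ + t₂ + t₃ := by
  refine ⟨angle_sum_of_conjProdOne h1 h1' h2 h2' h3 h3', ?_⟩
  rintro (h | h)
  · exact conjProdOne_of_angle_sum_le h1 h2 h3 h
  · have hinv : ∀ t, (rot (Real.pi - t))⁻¹ = rot t := by
      intro t
      rw [inv_eq_iff_mul_eq_one, ← rot_add, sub_add_cancel, rot_pi]
    have := (conjProdOne_of_angle_sum_le (by linarith : 0 < Real.pi - t₁)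
      (by linarith : 0 < Real.pi - t₂) (by linarith : 0 < Real.pi - t₃) (by linarith)).inv
    rwa [hinv, hinv, hinv] at this

/-! ### Residues whose fractional parts have sum outside `(1, 2)` -/

/-- The residue of `x` modulo `k` divided by `k`, i.e. the fractional part of `x / k`. -/
def fr (k : ℕ) (x : ℤ) : ℚ := ((x % (k : ℤ) : ℤ) : ℚ) / k

/-- The fractional parts of `x / k`, `y / l`, `z / m` have sum at most `1` or at least `2`. -/
def Good (k l m : ℕ) (x y z : ℤ) : Prop :=
  fr k x + fr l y + fr m z ≤ 1 ∨ 2 ≤ fr k x + fr l y + fr m z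

/-- Multiplication by `ρ` preserves and reflects `Good` on triples of nonzero residues. -/
def Pres (k l m : ℕ) (ρ : ℤ) : Prop :=
  ∀ x y z : ℤ, ¬ (k : ℤ) ∣ x → ¬ (l : ℤ) ∣ y → ¬ (m : ℤ) ∣ z →
    (Good k l m x y z ↔ Good k l m (ρ * x) (ρ * y) (ρ * z))

lemma fr_congr {k : ℕ} {x y : ℤ} (h : (k : ℤ) ∣ x - y) : fr k x = fr k y := by
  rw [fr, fr, Int.emod_eq_emod_iff_emod_sub_eq_zero.2 (Int.emod_eq_zero_of_dvd h)]

lemma fr_of_lt {k : ℕ} {x : ℤ} (h0 : 0 ≤ x) (h : x < k) : fr k x = x / k := by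
  rw [fr, Int.emod_eq_of_lt h0 h]

lemma fr_pos {k : ℕ} (hk : 0 < k) {x : ℤ} (h : ¬ (k : ℤ) ∣ x) : 0 < fr k x := by
  have h1 := Int.emod_nonneg x (by omega : (k : ℤ) ≠ 0)
  have h2 : x % (k : ℤ) ≠ 0 := fun h' => h (Int.dvd_of_emod_eq_zero h')
  have h3 : 0 < x % (k : ℤ) := by omega
  unfold fr
  have : (0 : ℚ) < ((x % (k : ℤ) : ℤ) : ℚ) := by exact_mod_cast h3
  positivity

lemma fr_lt_one {k : ℕ} (hk : 0 < k) (x : ℤ) : fr k x < 1 := by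
  have h1 := Int.emod_lt_of_pos x (by omega : (0 : ℤ) < k)
  unfold fr
  rw [div_lt_one (by positivity)]
  exact_mod_cast h1

lemma emod_neg {k : ℕ} (hk : 0 < k) {x : ℤ} (h : ¬ (k : ℤ) ∣ x) :
    (-x) % (k : ℤ) = k - x % (k : ℤ) := by
  have h1 := Int.emod_nonneg x (by omega : (k : ℤ) ≠ 0)
  have h2 : x % (k : ℤ) ≠ 0 := fun h' => h (Int.dvd_of_emod_eq_zero h')
  have h3 := Int.emod_lt_of_pos x (by omega : (0 : ℤ) < k)
  have h4 : (k : ℤ) - x % (k : ℤ) = ((k : ℤ) - x % (k : ℤ)) % (k : ℤ) :=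
    (Int.emod_eq_of_lt (by omega) (by omega)).symm
  rw [h4]
  refine Int.emod_eq_emod_iff_emod_sub_eq_zero.2 (Int.emod_eq_zero_of_dvd ?_)
  exact ⟨-(x / k) - 1, by linear_combination Int.emod_add_mul_ediv x k⟩

lemma fr_neg {k : ℕ} (hk : 0 < k) {x : ℤ} (h : ¬ (k : ℤ) ∣ x) : fr k (-x) = 1 - fr k x := by
  unfold fr
  rw [emod_neg hk h]
  push_cast
  field_simp

lemma good_neg {k l m : ℕ} (hk : 0 < k) (hl : 0 < l) (hm : 0 < m) {x y z : ℤ}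
    (hx : ¬ (k : ℤ) ∣ x) (hy : ¬ (l : ℤ) ∣ y) (hz : ¬ (m : ℤ) ∣ z) :
    Good k l m (-x) (-y) (-z) ↔ Good k l m x y z := by
  unfold Good
  rw [fr_neg hk hx, fr_neg hl hy, fr_neg hm hz]
  constructor <;> rintro (h | h) <;> first | (left; linarith) | (right; linarith)

lemma not_dvd_mul {k : ℕ} {ρ x : ℤ} (h : IsCoprime ρ k) (hx : ¬ (k : ℤ) ∣ x) :
    ¬ (k : ℤ) ∣ ρ * x := fun h' => hx (h.symm.dvd_of_dvd_mul_left h')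

lemma Pres.neg {k l m : ℕ} {ρ : ℤ} (hk : 0 < k) (hl : 0 < l) (hm : 0 < m)
    (ck : IsCoprime ρ k) (cl : IsCoprime ρ l) (cm : IsCoprime ρ m) (h : Pres k l m ρ) :
    Pres k l m (-ρ) := by
  intro x y z hx hy hz
  rw [h x y z hx hy hz, neg_mul, neg_mul, neg_mul,
    good_neg hk hl hm (not_dvd_mul ck hx) (not_dvd_mul cl hy) (not_dvd_mul cm hz)]

lemma Pres.rotate {k l m : ℕ} {ρ : ℤ} (h : Pres k l m ρ) : Pres l m k ρ := by
  intro y z x hy hz hx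
  have := h x y z hx hy hz
  unfold Good at *
  have e : ∀ a b c : ℚ, b + c + a = a + b + c := by intros; ring
  rw [e, e (fr k (ρ * x))]; exact this

/-- For `k ≥ 3` some `b / l + c / m` lies in `(1/k, 1 - 1/k]`. -/
lemma exists_mid {k l m : ℕ} (hk : 3 ≤ k) (hl : 2 ≤ l) (hm : 2 ≤ m)
    (h : (1 : ℚ) / k + 1 / l + 1 / m < 1) :
    ∃ b c : ℤ, 0 < b ∧ b < l ∧ 0 < c ∧ c < m ∧ (1 : ℚ) / k < b / l + c / m ∧
      (b : ℚ) / l + c / m ≤ 1 - 1 / k := by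
  have hl0 : (0 : ℚ) < l := by positivity
  have hm0 : (0 : ℚ) < 1 / m := by positivity
  have hl1 : (0 : ℚ) < 1 / l := by positivity
  have hk3 : (1 : ℚ) / k ≤ 1 / 3 := by
    apply one_div_le_one_div_of_le (by norm_num); exact_mod_cast hk
  by_cases hc : (1 : ℚ) / k < 1 / l + 1 / m
  · refine ⟨1, 1, by norm_num, by omega, by norm_num, by omega, ?_, ?_⟩
    · push_cast; exact hc
    · push_cast; linarith
  · push Not at hc
    set t : ℚ := l * (1 / k - 1 / m) with ht
    have ht' : t / l = 1 / k - 1 / m := by rw [ht]; field_simp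
    have hlt : ((⌊t⌋ + 1 : ℤ) : ℚ) / l ≤ 1 / k - 1 / m + 1 / l := by
      rw [← ht', ← add_div]
      push_cast
      gcongr
      exact Int.floor_le t
    have hgt : 1 / k - 1 / m < ((⌊t⌋ + 1 : ℤ) : ℚ) / l := by
      rw [← ht']
      push_cast
      gcongr
      exact Int.lt_floor_add_one t
    refine ⟨⌊t⌋ + 1, 1, ?_, ?_, by norm_num, by omega, ?_, ?_⟩
    · have : (0 : ℚ) < ((⌊t⌋ + 1 : ℤ) : ℚ) / l := by linarith
      have := (div_pos_iff_of_pos_right hl0).1 this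
      exact_mod_cast this
    · have : ((⌊t⌋ + 1 : ℤ) : ℚ) / l < 1 := by linarith
      rw [div_lt_one hl0] at this
      exact_mod_cast this
    · simp only [Int.cast_one]; linarith
    · simp only [Int.cast_one]; linarith

lemma emod_injOn {k : ℕ} {ρ : ℤ} (c : IsCoprime ρ k) {x y : ℤ} (hx : 0 < x) (hx' : x < k)
    (hy : 0 < y) (hy' : y < k) (h : (ρ * x) % (k : ℤ) = (ρ * y) % (k : ℤ)) : x = y := by
  have h1 : (k : ℤ) ∣ ρ * y - ρ * x := Int.ModEq.dvd h
  rw [← mul_sub] at h1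
  have h2 := c.symm.dvd_of_dvd_mul_left h1
  have h3 := Int.ModEq.eq (show x ≡ y [ZMOD k] from (Int.modEq_iff_dvd).2 h2)
  rwa [Int.emod_eq_of_lt hx.le hx', Int.emod_eq_of_lt hy.le hy'] at h3

/-- If `1 ≤ T ≤ k / 2` and multiplication by `ρ` preserves the residues `1, …, T`,
then `ρ ≡ 1`: otherwise some multiple of the residue of `ρ` would land just above `T`. -/
lemma dvd_sub_one_of_half {k : ℕ} {ρ T : ℤ} (c : IsCoprime ρ k) (hT : 1 ≤ T) (hTk : T < k)
    (h2T : 2 * T ≤ k)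
    (h : ∀ x : ℤ, ¬ (k : ℤ) ∣ x → (x % (k : ℤ) ≤ T → (ρ * x) % (k : ℤ) ≤ T)) :
    (k : ℤ) ∣ ρ - 1 := by
  have nd : ∀ x : ℤ, 0 < x → x < k → ¬ (k : ℤ) ∣ x := fun x h0 h1 h' => by
    have := Int.le_of_dvd h0 h'; omega
  have h1 := h 1 (nd 1 (by omega) (by omega)) (by rw [Int.emod_eq_of_lt] <;> omega)
  rw [mul_one] at h1
  set p := ρ % (k : ℤ) with hp
  have hp0 : 0 ≤ p := Int.emod_nonneg _ (by omega)
  have hpk : (k : ℤ) ∣ ρ - p := Int.dvd_self_sub_emod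
  have hp1 : p ≠ 0 := by
    intro h0
    rw [h0, sub_zero] at hpk
    exact not_dvd_mul c (nd 1 (by omega) (by omega)) (by simpa using hpk)
  by_cases hp2 : p = 1
  · rwa [hp2] at hpk
  exfalso
  have hp3 : 2 ≤ p := by omega
  set a := T / p + 1 with ha
  have hdm := Int.emod_add_mul_ediv T p
  have hm0 := Int.emod_nonneg T hp1
  have hm1 := Int.emod_lt_of_pos T (by omega : 0 < p)
  have hd0 : 0 ≤ T / p := Int.ediv_nonneg (by omega) hp0
  have hpa : p * a = T - T % p + p := by rw [ha]; linarith
  have hd1 : T / p ≤ T / 2 := by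
    rw [Int.le_ediv_iff_mul_le (by norm_num)]
    nlinarith
  have haT : a ≤ T := by omega
  have hak := nd a (by omega) (by omega)
  have h3 := h a hak (by rw [Int.emod_eq_of_lt] <;> omega)
  have h4 : (ρ * a) % (k : ℤ) = (p * a) % (k : ℤ) := by
    rw [hp]
    exact (Int.mod_modEq ρ k).symm.mul_right a
  rcases (show p * a ≤ k by omega).lt_or_eq with h5 | h5
  · rw [h4, Int.emod_eq_of_lt (by omega) h5] at h3; omega
  · apply not_dvd_mul c hak
    apply Int.dvd_of_emod_eq_zero
    rw [h4, h5, Int.emod_self]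

lemma dvd_sub_one_of_interval {k : ℕ} {ρ T : ℤ} (c : IsCoprime ρ k) (hT : 1 ≤ T)
    (hTk : T ≤ k - 2)
    (h : ∀ x : ℤ, ¬ (k : ℤ) ∣ x → (x % (k : ℤ) ≤ T ↔ (ρ * x) % (k : ℤ) ≤ T)) :
    (k : ℤ) ∣ ρ - 1 := by
  by_cases h2 : 2 * T ≤ k
  · exact dvd_sub_one_of_half c hT (by omega) h2 fun x hx => (h x hx).1
  · -- negation turns the complementary residues `T + 1, …, k - 1` into `1, …, k - 1 - T`
    refine dvd_sub_one_of_half (T := k - 1 - T) c (by omega) (by omega) (by omega) ?_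
    intro x hx hxT
    have hk : 0 < k := by omega
    have := h (-x) (by rwa [dvd_neg])
    rw [mul_neg, emod_neg hk hx, emod_neg hk (not_dvd_mul c hx)] at this
    omega

/-- Two initial intervals of nonzero residues matched by a unit have the same length. -/
lemma interval_eq {k : ℕ} {ρ T T' : ℤ} (c : IsCoprime ρ k) (hT : 0 ≤ T) (hTk : T < k)
    (hT' : 0 ≤ T') (hTk' : T' < k)
    (h : ∀ x : ℤ, ¬ (k : ℤ) ∣ x → (x % (k : ℤ) ≤ T ↔ (ρ * x) % (k : ℤ) ≤ T')) : T = T' := by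
  have nd : ∀ x : ℤ, 0 < x → x < k → ¬ (k : ℤ) ∣ x := fun x h0 h1 h' => by
    have := Int.le_of_dvd h0 h'; omega
  have key : ∀ x : ℤ, 0 < x → x < k → 0 < (ρ * x) % (k : ℤ) ∧ (ρ * x) % (k : ℤ) < k ∧
      (x ≤ T ↔ (ρ * x) % (k : ℤ) ≤ T') := by
    intro x h0 h1
    have h2 := Int.emod_nonneg (ρ * x) (by omega : (k : ℤ) ≠ 0)
    have h3 := Int.emod_lt_of_pos (ρ * x) (by omega : (0 : ℤ) < k)
    have h4 : (ρ * x) % (k : ℤ) ≠ 0 :=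
      fun h' => not_dvd_mul c (nd x h0 h1) (Int.dvd_of_emod_eq_zero h')
    have h5 := h x (nd x h0 h1)
    rw [Int.emod_eq_of_lt h0.le h1] at h5
    exact ⟨by omega, h3, h5⟩
  have c1 : (Finset.Icc 1 T).card ≤ (Finset.Icc 1 T').card := by
    apply Finset.card_le_card_of_injOn (fun x => (ρ * x) % (k : ℤ))
    · intro x hx
      simp only [Finset.coe_Icc, Set.mem_Icc] at hx ⊢
      have := key x (by omega) (by omega)
      have := this.2.2.1 hx.2
      omega
    · intro x hx y hy hxy
      simp only [Finset.coe_Icc, Set.mem_Icc] at hx hy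
      exact emod_injOn c (by omega) (by omega) (by omega) (by omega) hxy
  have c2 : (Finset.Icc (T + 1) (k - 1)).card ≤ (Finset.Icc (T' + 1) (k - 1)).card := by
    apply Finset.card_le_card_of_injOn (fun x => (ρ * x) % (k : ℤ))
    · intro x hx
      simp only [Finset.coe_Icc, Set.mem_Icc] at hx ⊢
      have := key x (by omega) (by omega)
      have h6 := this.2.2
      omega
    · intro x hx y hy hxy
      simp only [Finset.coe_Icc, Set.mem_Icc] at hx hy
      exact emod_injOn c (by omega) (by omega) (by omega) (by omega) hxy
  simp only [Int.card_Icc] at c1 c2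
  omega

/-- For fixed `y`, `z` with fractional parts of sum `s ≤ 1`, the good residues `x` are those up to
`⌊k (1 - s)⌋`. -/
lemma good_iff_le_floor {k l m : ℕ} (hk : 0 < k) {x y z : ℤ}
    (hs : fr l y + fr m z ≤ 1) :
    Good k l m x y z ↔ x % (k : ℤ) ≤ ⌊(k : ℚ) * (1 - (fr l y + fr m z))⌋ := by
  rw [Int.le_floor]
  have h1 := fr_lt_one hk x
  have h2 : ((x % (k : ℤ) : ℤ) : ℚ) = k * fr k x := by unfold fr; field_simp
  have hk' : (0 : ℚ) < k := by exact_mod_cast hk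
  rw [h2, mul_le_mul_iff_right₀ hk']
  unfold Good
  constructor
  · rintro (h | h) <;> linarith
  · intro h; left; linarith

lemma Pres.dvd_or_of_three_le {k l m : ℕ} {ρ : ℤ} (hk : 3 ≤ k) (hl : 2 ≤ l) (hm : 2 ≤ m)
    (h : (1 : ℚ) / k + 1 / l + 1 / m < 1)
    (ck : IsCoprime ρ k) (cl : IsCoprime ρ l) (cm : IsCoprime ρ m) (hP : Pres k l m ρ) :
    (k : ℤ) ∣ ρ - 1 ∨ (k : ℤ) ∣ ρ + 1 := by
  obtain ⟨b, c, hb, hbl, hc, hcm, hlo, hhi⟩ := exists_mid hk hl hm h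
  have nb : ¬ (l : ℤ) ∣ b := fun h' => by have := Int.le_of_dvd hb h'; omega
  have nc : ¬ (m : ℤ) ∣ c := fun h' => by have := Int.le_of_dvd hc h'; omega
  rw [← fr_of_lt hb.le hbl, ← fr_of_lt hc.le hcm] at hlo hhi
  have hk0 : (0 : ℚ) < k := by positivity
  have hk1 : (0 : ℚ) < 1 / k := by positivity
  have kk : (k : ℚ) * (1 / k) = 1 := by field_simp
  -- up to the sign of `ρ`, the image of `(b, c)` also has fractional parts of sum at most `1`
  have main : ∀ σ : ℤ, IsCoprime σ k → IsCoprime σ l → IsCoprime σ m → Pres k l m σ →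
      fr l (σ * b) + fr m (σ * c) ≤ 1 → (k : ℤ) ∣ σ - 1 := by
    intro σ dk dl dm hσ hs
    have p1 := fr_pos (by omega) (not_dvd_mul dl nb)
    have p2 := fr_pos (by omega) (not_dvd_mul dm nc)
    set T := ⌊(k : ℚ) * (1 - (fr l b + fr m c))⌋ with hT
    set T' := ⌊(k : ℚ) * (1 - (fr l (σ * b) + fr m (σ * c)))⌋ with hT'
    have key : ∀ x : ℤ, ¬ (k : ℤ) ∣ x → (x % (k : ℤ) ≤ T ↔ (σ * x) % (k : ℤ) ≤ T') := by
      intro x hx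
      rw [← good_iff_le_floor (by omega) (by linarith), ← good_iff_le_floor (by omega) hs]
      exact hσ x b c hx nb nc
    have T1 : 1 ≤ T := by
      rw [hT, Int.le_floor]; push_cast; nlinarith
    have T2 : T ≤ k - 2 := by
      have : T < k - 1 := by
        rw [hT, Int.floor_lt]; push_cast; nlinarith
      omega
    have T1' : 0 ≤ T' := by
      rw [hT', Int.le_floor]; push_cast; nlinarith
    have T2' : T' < k := by
      rw [hT', Int.floor_lt]; push_cast; nlinarith
    have e := interval_eq dk (by omega) (by omega) T1' T2' key
    rw [← e] at key
    exact dvd_sub_one_of_interval dk T1 T2 key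
  rcases le_total (fr l (ρ * b) + fr m (ρ * c)) 1 with hs | hs
  · left; exact main ρ ck cl cm hP hs
  · right
    have := main (-ρ) ck.neg_left cl.neg_left cm.neg_left
      (hP.neg (by omega) (by omega) (by omega) ck cl cm) (by
        rw [neg_mul, neg_mul, fr_neg (by omega) (not_dvd_mul cl nb),
          fr_neg (by omega) (not_dvd_mul cm nc)]
        linarith)
    have e : -ρ - 1 = -(ρ + 1) := by ring
    rwa [e, dvd_neg] at this

lemma two_dvd_of_coprime {ρ : ℤ} (c : IsCoprime ρ (2 : ℕ)) : (2 : ℤ) ∣ ρ - 1 := by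
  have : ¬ (2 : ℤ) ∣ ρ := fun h => by
    have := c.symm.isUnit_of_dvd' (dvd_refl _) (by exact_mod_cast h)
    rw [Int.isUnit_iff] at this
    omega
  omega

lemma Pres.dvd_or {k l m : ℕ} {ρ : ℤ} (hk : 2 ≤ k) (hl : 2 ≤ l) (hm : 2 ≤ m)
    (h : (1 : ℚ) / k + 1 / l + 1 / m < 1)
    (ck : IsCoprime ρ k) (cl : IsCoprime ρ l) (cm : IsCoprime ρ m) (hP : Pres k l m ρ) :
    (k : ℤ) ∣ ρ - 1 ∨ (k : ℤ) ∣ ρ + 1 := by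
  rcases hk.lt_or_eq with hk | rfl
  · exact hP.dvd_or_of_three_le hk hl hm h ck cl cm
  · left; exact_mod_cast two_dvd_of_coprime ck

/-- The sign at `k` agrees with a common sign at `l` and `m`. -/
lemma Pres.sign {k l m : ℕ} {ρ : ℤ} (hk : 2 ≤ k) (hl : 2 ≤ l) (hm : 2 ≤ m)
    (h : (1 : ℚ) / k + 1 / l + 1 / m < 1) (ck : IsCoprime ρ k) (hP : Pres k l m ρ)
    (dl : (l : ℤ) ∣ ρ - 1) (dm : (m : ℤ) ∣ ρ - 1)
    (dk : (k : ℤ) ∣ ρ - 1 ∨ (k : ℤ) ∣ ρ + 1) : (k : ℤ) ∣ ρ - 1 := by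
  rcases dk with dk | dk
  · exact dk
  rcases hk.lt_or_eq with hk | rfl
  swap
  · exact_mod_cast two_dvd_of_coprime ck
  exfalso
  obtain ⟨b, c, hb, hbl, hc, hcm, hlo, hhi⟩ := exists_mid hk hl hm h
  have nb : ¬ (l : ℤ) ∣ b := fun h' => by have := Int.le_of_dvd hb h'; omega
  have nc : ¬ (m : ℤ) ∣ c := fun h' => by have := Int.le_of_dvd hc h'; omega
  have n1 : ¬ (k : ℤ) ∣ 1 := fun h' => by have := Int.le_of_dvd one_pos h'; omega
  rw [← fr_of_lt hb.le hbl, ← fr_of_lt hc.le hcm] at hlo hhi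
  have e1 : fr k 1 = 1 / k := by rw [fr_of_lt (by omega) (by omega)]; simp
  have hg := (hP 1 b c n1 nb nc).1 (by left; rw [e1]; linarith)
  have eb : fr l (ρ * b) = fr l b := fr_congr (by
    have := dl.mul_right b; rwa [sub_mul, one_mul] at this)
  have ec : fr m (ρ * c) = fr m c := fr_congr (by
    have := dm.mul_right c; rwa [sub_mul, one_mul] at this)
  have ek : fr k (ρ * 1) = 1 - 1 / k := by
    rw [← e1, ← fr_neg (by omega) n1]
    exact fr_congr (by simpa using dk)
  unfold Good at hg
  rw [eb, ec, ek] at hg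
  have hk1 : (0 : ℚ) < 1 / k := by positivity
  rcases hg with hg | hg <;> linarith

lemma Pres.dvd_all {k l m : ℕ} {ρ : ℤ} (hk : 2 ≤ k) (hl : 2 ≤ l) (hm : 2 ≤ m)
    (h : (1 : ℚ) / k + 1 / l + 1 / m < 1)
    (ck : IsCoprime ρ k) (cl : IsCoprime ρ l) (cm : IsCoprime ρ m) (hP : Pres k l m ρ) :
    ((k : ℤ) ∣ ρ - 1 ∧ (l : ℤ) ∣ ρ - 1 ∧ (m : ℤ) ∣ ρ - 1) ∨
    ((k : ℤ) ∣ ρ + 1 ∧ (l : ℤ) ∣ ρ + 1 ∧ (m : ℤ) ∣ ρ + 1) := by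
  have hl' : (1 : ℚ) / l + 1 / m + 1 / k < 1 := by linarith
  have hm' : (1 : ℚ) / m + 1 / k + 1 / l < 1 := by linarith
  have dk := hP.dvd_or hk hl hm h ck cl cm
  have dl := hP.rotate.dvd_or hl hm hk hl' cl cm ck
  have dm := hP.rotate.rotate.dvd_or hm hk hl hm' cm ck cl
  have hN := hP.neg (by omega) (by omega) (by omega) ck cl cm
  have e : ∀ n : ℤ, n ∣ -ρ - 1 ↔ n ∣ ρ + 1 := fun n => by
    rw [show -ρ - 1 = -(ρ + 1) by ring, dvd_neg]
  have e' : ∀ n : ℤ, n ∣ -ρ + 1 ↔ n ∣ ρ - 1 := fun n => by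
    rw [show -ρ + 1 = -(ρ - 1) by ring, dvd_neg]
  have sk := hP.sign hk hl hm h ck
  have sl := hP.rotate.sign hl hm hk hl' cl
  have sm := hP.rotate.rotate.sign hm hk hl hm' cm
  have nk := hN.sign hk hl hm h ck.neg_left
  have nl := hN.rotate.sign hl hm hk hl' cl.neg_left
  have nm := hN.rotate.rotate.sign hm hk hl hm' cm.neg_left
  simp only [e, e'] at nk nl nm
  rcases dk with dk | dk <;> rcases dl with dl | dl <;> rcases dm with dm | dm
  · exact Or.inl ⟨dk, dl, dm⟩
  · exact Or.inl ⟨dk, dl, sm dk dl (Or.inr dm)⟩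
  · exact Or.inl ⟨dk, sl dm dk (Or.inr dl), dm⟩
  · exact Or.inr ⟨nk dl dm (Or.inr dk), dl, dm⟩
  · exact Or.inl ⟨sk dl dm (Or.inr dk), dl, dm⟩
  · exact Or.inr ⟨dk, nl dm dk (Or.inr dl), dm⟩
  · exact Or.inr ⟨dk, dl, nm dk dl (Or.inr dm)⟩
  · exact Or.inr ⟨dk, dl, dm⟩

/-! ### Passing between conjugacy classes and residues -/

/-- The conjugacy class of `x`. -/
def cls {G : Type*} [Group G] (x : G) : Set G := {y | IsConj x y}

lemma cls_subset_iff {G : Type*} [Group G] (x : G) (k : ℕ) :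
    cls x ⊆ {g | g ^ k = 1 ∧ g ≠ 1} ↔ x ^ k = 1 ∧ x ≠ 1 := by
  constructor
  · intro h; exact h (IsConj.refl x)
  · rintro ⟨h1, h2⟩ y hy
    obtain ⟨c, rfl⟩ := isConj_iff.1 hy
    refine ⟨by rw [conj_pow, h1]; group, fun h => h2 ?_⟩
    rwa [conj_eq_one_iff] at h

lemma cls_mem_BSet {G : Type*} [Group G] (k l m : ℕ) (x y z : G) :
    (cls x, cls y, cls z) ∈ BSet k l m G ↔ ConjProdOne x y z ∧ (x ^ k = 1 ∧ x ≠ 1) ∧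
      (y ^ l = 1 ∧ y ≠ 1) ∧ (z ^ m = 1 ∧ z ≠ 1) := by
  have e : (∃ c ∈ cls x, ∃ d ∈ cls y, ∃ e ∈ cls z, c * d * e = 1) ↔ ConjProdOne x y z := by
    constructor
    · rintro ⟨c, hc, d, hd, e, he, h⟩; exact ⟨c, d, e, hc, hd, he, h⟩
    · rintro ⟨c, d, e, hc, hd, he, h⟩; exact ⟨c, hc, d, hd, e, he, h⟩
  simp only [BSet, Set.mem_ofPred_eq, cls_subset_iff, e]
  constructor
  · rintro ⟨-, -, -, h⟩; exact h
  · intro h; exact ⟨⟨x, rfl⟩, ⟨y, rfl⟩, ⟨z, rfl⟩, h⟩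

lemma image_zpow_cls {G : Type*} [Group G] (x : G) (ρ : ℤ) :
    (fun c => c ^ ρ) '' cls x = cls (x ^ ρ) := by
  ext y
  constructor
  · rintro ⟨c, hc, rfl⟩
    obtain ⟨u, rfl⟩ := isConj_iff.1 hc
    exact isConj_iff.2 ⟨u, by simp only [conj_zpow]⟩
  · intro hy
    obtain ⟨u, rfl⟩ := isConj_iff.1 hy
    exact ⟨u * x * u⁻¹, isConj_iff.2 ⟨u, rfl⟩, by simp only [conj_zpow]⟩

lemma zpow_eq_of_dvd {G : Type*} [Group G] {x : G} {k : ℕ} {ρ σ : ℤ} (hx : x ^ k = 1)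
    (h : (k : ℤ) ∣ ρ - σ) : x ^ ρ = x ^ σ := by
  obtain ⟨t, ht⟩ := h
  rw [show ρ = σ + k * t by linarith, zpow_add, zpow_mul, zpow_natCast, hx, one_zpow, mul_one]

lemma mem_MSet_of_dvd {G : Type*} [Group G] {k l m n : ℕ} (hk : k ∣ n) (hl : l ∣ n) (hm : m ∣ n)
    (r : (ZMod n)ˣ) (hr : r = 1 ∨ r = -1) : r ∈ MSet k l m n G := by
  intro ρ hρ T hT
  obtain ⟨C, D, E⟩ := T
  obtain ⟨⟨x, hx⟩, ⟨y, hy⟩, ⟨z, hz⟩, -⟩ := id hT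
  change C = cls x at hx
  change D = cls y at hy
  change E = cls z at hz
  subst hx hy hz
  rw [cls_mem_BSet] at hT
  simp only [image_zpow_cls]
  rw [cls_mem_BSet]
  obtain ⟨hp, hx, hy, hz⟩ := hT
  rcases hr with rfl | rfl
  · have hn : (n : ℤ) ∣ ρ - 1 := by
      rw [← ZMod.intCast_zmod_eq_zero_iff_dvd]; push_cast; rw [hρ]; simp
    rw [zpow_eq_of_dvd hx.1 (dvd_trans (by exact_mod_cast hk) hn),
      zpow_eq_of_dvd hy.1 (dvd_trans (by exact_mod_cast hl) hn),
      zpow_eq_of_dvd hz.1 (dvd_trans (by exact_mod_cast hm) hn)]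
    simp only [zpow_one]
    exact ⟨hp, hx, hy, hz⟩
  · have hn : (n : ℤ) ∣ ρ - (-1) := by
      rw [← ZMod.intCast_zmod_eq_zero_iff_dvd]; push_cast; rw [hρ]; simp
    rw [zpow_eq_of_dvd hx.1 (dvd_trans (by exact_mod_cast hk) hn),
      zpow_eq_of_dvd hy.1 (dvd_trans (by exact_mod_cast hl) hn),
      zpow_eq_of_dvd hz.1 (dvd_trans (by exact_mod_cast hm) hn)]
    simp only [zpow_neg_one, inv_pow, inv_eq_one, ne_eq]
    exact ⟨hp.inv, hx, hy, hz⟩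

/-- The rotation of angle `π x / k`, an element of order dividing `k`. -/
noncomputable def krot (k : ℕ) (x : ℤ) : PSL(2, ℝ) := rot (x * (Real.pi / k))

lemma krot_zpow (k : ℕ) (x ρ : ℤ) : krot k x ^ ρ = krot k (ρ * x) := by
  rw [krot, rot_zpow, krot]; push_cast; ring_nf

lemma krot_pow_self {k : ℕ} (hk : 0 < k) (x : ℤ) : krot k x ^ k = 1 := by
  rw [← zpow_natCast, krot, rot_zpow, ← rot_int_mul_pi x]
  congr 1
  have : (k : ℝ) ≠ 0 := by positivity
  push_cast
  field_simp

lemma krot_eq_rot_fr {k : ℕ} (hk : 0 < k) (x : ℤ) :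
    krot k x = rot ((fr k x : ℚ) * Real.pi) := by
  have hk' : (k : ℝ) ≠ 0 := by positivity
  have e : (x : ℝ) = ((x % (k : ℤ) : ℤ) : ℝ) + k * ((x / (k : ℤ) : ℤ) : ℝ) := by
    exact_mod_cast (Int.emod_add_mul_ediv x k).symm
  have : x * (Real.pi / k) = (fr k x : ℚ) * Real.pi + ((x / (k : ℤ) : ℤ) : ℝ) * Real.pi := by
    rw [e, fr]; push_cast; field_simp
  rw [krot, this, rot_add, rot_int_mul_pi, mul_one]

lemma fr_mul_pi {k : ℕ} (hk : 0 < k) {x : ℤ} (hx : ¬ (k : ℤ) ∣ x) :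
    0 < (fr k x : ℝ) * Real.pi ∧ (fr k x : ℝ) * Real.pi < Real.pi := by
  have h1 : (0 : ℝ) < fr k x := by exact_mod_cast fr_pos hk hx
  have h2 : (fr k x : ℝ) < 1 := by exact_mod_cast fr_lt_one hk x
  exact ⟨by positivity, by nlinarith [Real.pi_pos]⟩

lemma krot_ne_one {k : ℕ} (hk : 0 < k) {x : ℤ} (hx : ¬ (k : ℤ) ∣ x) : krot k x ≠ 1 := by
  rw [krot_eq_rot_fr hk]
  exact rot_ne_one (fr_mul_pi hk hx).1 (fr_mul_pi hk hx).2

lemma krot_mem_BSet {k l m : ℕ} (hk : 0 < k) (hl : 0 < l) (hm : 0 < m) {x y z : ℤ}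
    (hx : ¬ (k : ℤ) ∣ x) (hy : ¬ (l : ℤ) ∣ y) (hz : ¬ (m : ℤ) ∣ z) :
    (cls (krot k x), cls (krot l y), cls (krot m z)) ∈ BSet k l m PSL(2, ℝ) ↔
      Good k l m x y z := by
  have hcp : ConjProdOne (krot k x) (krot l y) (krot m z) ↔ Good k l m x y z := by
    rw [krot_eq_rot_fr hk, krot_eq_rot_fr hl, krot_eq_rot_fr hm,
      conjProdOne_iff (fr_mul_pi hk hx).1 (fr_mul_pi hk hx).2 (fr_mul_pi hl hy).1
        (fr_mul_pi hl hy).2 (fr_mul_pi hm hz).1 (fr_mul_pi hm hz).2,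
      ← add_mul, ← add_mul, mul_le_iff_le_one_left Real.pi_pos,
      mul_le_mul_iff_left₀ Real.pi_pos, Good]
    norm_cast
  rw [cls_mem_BSet, hcp]
  exact ⟨fun h => h.1, fun h => ⟨h, ⟨krot_pow_self hk x, krot_ne_one hk hx⟩,
    ⟨krot_pow_self hl y, krot_ne_one hl hy⟩, ⟨krot_pow_self hm z, krot_ne_one hm hz⟩⟩⟩

/-- An element of `M` maps good triples to good triples; some positive power of it is `1`,
so it also reflects goodness. -/
lemma pres_of_mem_MSet {k l m n : ℕ} (hk : 0 < k) (hl : 0 < l) (hm : 0 < m) (hn : 0 < n)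
    (kn : k ∣ n) (ln : l ∣ n) (mn : m ∣ n) {r : (ZMod n)ˣ} (hr : r ∈ MSet k l m n PSL(2, ℝ))
    {ρ : ℤ} (hρ : (ρ : ZMod n) = r) (ck : IsCoprime ρ k) (cl : IsCoprime ρ l)
    (cm : IsCoprime ρ m) : Pres k l m ρ := by
  have fwd : ∀ x y z : ℤ, ¬ (k : ℤ) ∣ x → ¬ (l : ℤ) ∣ y → ¬ (m : ℤ) ∣ z →
      Good k l m x y z → Good k l m (ρ * x) (ρ * y) (ρ * z) := by
    intro x y z hx hy hz h
    have := hr ρ hρ _ ((krot_mem_BSet hk hl hm hx hy hz).2 h)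
    simp only [image_zpow_cls, krot_zpow] at this
    exact (krot_mem_BSet hk hl hm (not_dvd_mul ck hx) (not_dvd_mul cl hy)
      (not_dvd_mul cm hz)).1 this
  have iter : ∀ j : ℕ, ∀ x y z : ℤ, ¬ (k : ℤ) ∣ x → ¬ (l : ℤ) ∣ y → ¬ (m : ℤ) ∣ z →
      Good k l m x y z → Good k l m (ρ ^ j * x) (ρ ^ j * y) (ρ ^ j * z) := by
    intro j
    induction j with
    | zero => intro x y z _ _ _ h; simpa using h
    | succ j ih =>
      intro x y z hx hy hz h
      have := ih _ _ _ (not_dvd_mul ck hx) (not_dvd_mul cl hy) (not_dvd_mul cm hz)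
        (fwd x y z hx hy hz h)
      simpa only [pow_succ, mul_assoc] using this
  intro x y z hx hy hz
  refine ⟨fwd x y z hx hy hz, fun h => ?_⟩
  have h' := iter (n.totient - 1) _ _ _ (not_dvd_mul ck hx) (not_dvd_mul cl hy)
    (not_dvd_mul cm hz) h
  have ht : n.totient - 1 + 1 = n.totient := Nat.sub_add_cancel (Nat.totient_pos.2 hn)
  simp only [← mul_assoc, ← pow_succ, ht] at h'
  have hd : (n : ℤ) ∣ ρ ^ n.totient - 1 := by
    rw [← ZMod.intCast_zmod_eq_zero_iff_dvd]
    push_cast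
    rw [hρ, ← Units.val_pow_eq_pow_val, ZMod.pow_totient]; simp
  have e : ∀ {q : ℕ} (x : ℤ), q ∣ n → fr q (ρ ^ n.totient * x) = fr q x := by
    intro q x hq
    apply fr_congr
    have := ((Int.natCast_dvd_natCast.2 hq).trans hd).mul_right x
    rwa [sub_mul, one_mul] at this
  unfold Good at h' ⊢
  rwa [e x kn, e y ln, e z mn] at h'

theorem MSet_psl2R_eq_pm_one (k l m : ℕ) (hk : 2 ≤ k) (hl : 2 ≤ l) (hm : 2 ≤ m)
    (h : (1 : ℚ) / k + 1 / l + 1 / m < 1) :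
    MSet k l m (Nat.lcm k (Nat.lcm l m)) PSL(2, ℝ) =
      {1, -1} := by
  set n := Nat.lcm k (Nat.lcm l m) with hnd
  have kn : k ∣ n := Nat.dvd_lcm_left _ _
  have ln : l ∣ n := (Nat.dvd_lcm_left l m).trans (Nat.dvd_lcm_right _ _)
  have mn : m ∣ n := (Nat.dvd_lcm_right l m).trans (Nat.dvd_lcm_right _ _)
  have hn : 0 < n := Nat.lcm_pos (by omega) (Nat.lcm_pos (by omega) (by omega))
  ext r
  rw [Set.mem_insert_iff, Set.mem_singleton_iff]
  refine ⟨fun hr => ?_, mem_MSet_of_dvd kn ln mn r⟩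
  obtain ⟨ρ, hρ⟩ := ZMod.intCast_surjective (r : ZMod n)
  have cn : IsCoprime ρ n := by
    rw [isCoprime_comm, ← ZMod.coe_int_isUnit_iff_isCoprime, hρ]; exact r.isUnit
  have ck := cn.of_isCoprime_of_dvd_right (Int.natCast_dvd_natCast.2 kn)
  have cl := cn.of_isCoprime_of_dvd_right (Int.natCast_dvd_natCast.2 ln)
  have cm := cn.of_isCoprime_of_dvd_right (Int.natCast_dvd_natCast.2 mn)
  have hP := pres_of_mem_MSet (by omega) (by omega) (by omega) hn kn ln mn hr hρ ck cl cm
  have lcm_dvd : ∀ a : ℤ, (k : ℤ) ∣ a → (l : ℤ) ∣ a → (m : ℤ) ∣ a → (n : ℤ) ∣ a := by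
    intro a h1 h2 h3
    rw [Int.natCast_dvd] at *
    exact Nat.lcm_dvd h1 (Nat.lcm_dvd h2 h3)
  rcases hP.dvd_all hk hl hm h ck cl cm with ⟨h1, h2, h3⟩ | ⟨h1, h2, h3⟩
  · left
    have := lcm_dvd _ h1 h2 h3
    rw [← ZMod.intCast_zmod_eq_zero_iff_dvd] at this
    push_cast at this
    rw [hρ, sub_eq_zero] at this
    exact Units.ext this
  · right
    have := lcm_dvd _ h1 h2 h3
    rw [← ZMod.intCast_zmod_eq_zero_iff_dvd] at this
    push_cast at this
    rw [hρ, add_eq_zero_iff_eq_neg] at this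
    exact Units.ext (by simpa using this)
end

section
/- Let m ≥ 3 be an integer, let r be an integer coprime to m, and let c be an integer with 1 ≤ c ≤ m - 2. If the sets {1, 2, ..., c} and {r, 2r, ..., cr} are equal modulo m (that is, {1 mod m, ..., c mod m} = {r mod m, ..., cr mod m} as subsets of ℤ/mℤ), then r ≡ 1 (mod m). -/
/-!
Let `S = {1, …, c}` modulo `m`, so that `rS = S`. In particular `r ∈ S`, say `r ≡ k` with
`1 ≤ k ≤ c`. The only `x ∈ S` with `x + 1 ∉ S` is `c`; multiplying by `r`, the only `y ∈ S` with
`y + r ∉ S` is `rc`. If `k ≥ 2`, then `c + 1 - k` and `c + 2 - k` both lie in `S`, while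
`c + 1` and `c + 2` do not (as `c + 2 ≤ m`), so both equal `r(c + 1)`, which is absurd. Hence `k = 1`.
-/

/-- An exit point `n` of translation by `k ≡ r` (that is, `n - k ∈ {1, …, c}` but
`n ∈ {c + 1, …, m}`) must be congruent to `r (c + 1)`. -/
lemma exit_point_eq (m : ℕ) (r : ZMod m) (c k n : ℕ) (hk : (k : ZMod m) = r)
    (h : (fun i : ℕ => (i : ZMod m)) '' Set.Icc 1 c =
        (fun i : ℕ => (i : ZMod m) * r) '' Set.Icc 1 c)
    (hkn : k + 1 ≤ n) (hnc : n ≤ c + k) (hcn : c < n) (hnm : n ≤ m) :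
    (n : ZMod m) = (c + 1) * r := by
  have h1 : ((n - k : ℕ) : ZMod m) ∈ (fun i : ℕ => (i : ZMod m)) '' Set.Icc 1 c :=
    ⟨n - k, ⟨by omega, by omega⟩, rfl⟩
  rw [h] at h1
  obtain ⟨x, ⟨hx1, hxc⟩, hx⟩ := h1
  have hn : (n : ZMod m) = (x + 1) * r := by
    have hsub : (n : ZMod m) = ((n - k : ℕ) : ZMod m) + k := by
      rw [← Nat.cast_add, Nat.sub_add_cancel (by omega)]
    rw [hsub, ← hx, hk]
    ring
  rcases hxc.lt_or_eq with hlt | rfl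
  · exfalso
    have h2 : (n : ZMod m) ∈ (fun i : ℕ => (i : ZMod m) * r) '' Set.Icc 1 c :=
      ⟨x + 1, ⟨by omega, by omega⟩, by rw [hn]; push_cast; rfl⟩
    rw [← h] at h2
    obtain ⟨j, ⟨hj1, hjc⟩, hj⟩ := h2
    have hmod := (ZMod.natCast_eq_natCast_iff j n m).1 hj
    have hdvd := (Nat.modEq_iff_dvd' (by omega)).1 hmod
    have := Nat.le_of_dvd (by omega) hdvd
    omega
  · exact hn

theorem eq_one_of_multiples_set_eq (m : ℕ) (hm : 3 ≤ m) (r : ℤ)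
    (hr : IsCoprime r (m : ℤ)) (c : ℕ) (hc1 : 1 ≤ c) (hc2 : c ≤ m - 2)
    (h : (fun i : ℕ => ((i : ℤ) : ZMod m)) '' Set.Icc 1 c =
        (fun i : ℕ => (((i : ℤ) * r : ℤ) : ZMod m)) '' Set.Icc 1 c) :
    (r : ZMod m) = 1 := by
  push_cast at h
  have hrS : (r : ZMod m) ∈ (fun i : ℕ => (i : ZMod m) * (r : ZMod m)) '' Set.Icc 1 c :=
    ⟨1, ⟨le_rfl, hc1⟩, by simp⟩
  rw [← h] at hrS
  obtain ⟨k, ⟨hk1, hkc⟩, hk⟩ := hrS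
  rcases hk1.eq_or_lt with rfl | hk2
  · simpa using hk.symm
  · exfalso
    have e1 := exit_point_eq m r c k (c + 1) hk h (by omega) (by omega) (by omega) (by omega)
    have e2 := exit_point_eq m r c k (c + 2) hk h (by omega) (by omega) (by omega) (by omega)
    have hmod := (ZMod.natCast_eq_natCast_iff (c + 1) (c + 2) m).1 (e1.trans e2.symm)
    have hdvd := (Nat.modEq_iff_dvd' (by omega)).1 hmod
    have := Nat.le_of_dvd (by omega) hdvd
    omega
end

section
/- Let G be a group, let ⟨b⟩ be an infinite cyclic group with generator b, let φ be an automorphism of G, let p, q ∈ G, and let ψ be the unique automorphism of the free product G ∗ ⟨b⟩ that restricts to φ on G and sends b to pb. Then there exist v, w ∈ G ∗ ⟨b⟩ such that ψ(v)v⁻¹ = wqw⁻¹ if and only if there exist x, y ∈ G such that φ(x)x⁻¹ = yqy⁻¹, or φ(x)px⁻¹ = yqy⁻¹, or p⁻¹φ(x)x⁻¹ = yqy⁻¹, or p⁻¹φ(x)px⁻¹ = yqy⁻¹. -/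
/-!
Write `v` as a reduced word `g₀ b^{e₁} g₁ ⋯ b^{eₙ} gₙ` with `eᵢ = ±1`, where `gᵢ = 1` is allowed
between two `b`-letters only if they have the same sign. Then `ψ v` is again reduced, with the same
signs, and its coefficients have the form `B * φ gᵢ * A` with `A ∈ {1, p}` and `B ∈ {1, p⁻¹}`
(`FreeProductZ.Red.map`). So the cyclic word `ψ v * v⁻¹` can only cancel at its two seams, the
middle one and the cyclic one. Cancelling there removes the last or the first letter of `v` and
leaves an element of the same shape `B * ψ v' * A * v'⁻¹`, with `v'` shorter. If neither seam
cancels, the word is cyclically reduced and contains `b`, hence is not conjugate to an element of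
`G` (`FreeProductZ.not_conj`): its square is twice as long, whereas `w * q ^ 2 * w⁻¹` is never
longer than `w * q * w⁻¹`. After finitely many steps (`FreeProductZ.descent`) one reaches
`B * φ x * A * x⁻¹` with `x ∈ G`, and the retraction of the free product onto `G` killing `b`
turns conjugacy in the free product into conjugacy in `G`.

That the number of `b`-letters in a reduced word depends only on the element represented
(`FreeProductZ.Len.unique`) is Britton's lemma for the HNN extension of `G` along the trivial
subgroup.
-/

open scoped Monoid.Coprod

namespace FreeProductZ

open Monoid.Coprod

variable {G : Type*} [Group G]

/-- The letter `b ^ s` of `G ∗ ⟨b⟩`, for a sign `s = ±1`. -/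
def letter (G : Type*) [Group G] (s : ℤˣ) : G ∗ Multiplicative ℤ :=
  inr (Multiplicative.ofAdd (s : ℤ))

lemma letter_neg (s : ℤˣ) : letter G (-s) = (letter G s)⁻¹ := by
  simp [letter, ← map_inv]

/-- `Red s t n x` says that `x` is the value of a reduced word with exactly `n ≥ 1` letters `b^{±1}`
whose first letter is `b ^ s` and whose last letter is `b ^ t`, with no coefficient from `G` outside
these two. A trivial coefficient may only separate letters of the same sign. -/
inductive Red : ℤˣ → ℤˣ → ℕ → G ∗ Multiplicative ℤ → Prop
  | single (s : ℤˣ) : Red s s 1 (letter G s)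
  | append {s t u v : ℤˣ} {n m : ℕ} {x y : G ∗ Multiplicative ℤ} (g : G) :
      Red s t n x → Red u v m y → (g = 1 → t = u) → Red s v (n + m) (x * inl g * y)

lemma Red.pos {s t : ℤˣ} {n : ℕ} {x : G ∗ Multiplicative ℤ} (h : Red s t n x) : 0 < n := by
  induction h <;> omega

lemma Red.inv {s t : ℤˣ} {n : ℕ} {x : G ∗ Multiplicative ℤ} (h : Red s t n x) :
    Red (-t) (-s) n x⁻¹ := by
  induction h with
  | single s => rw [← letter_neg]; exact .single _
  | append g _ _ hg ih₁ ih₂ =>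
    have := Red.append g⁻¹ ih₂ ih₁ (fun h => by rw [hg (inv_eq_one.1 h)])
    rw [add_comm] at this
    simpa [mul_assoc] using this

lemma Red.peel_left {s t : ℤˣ} {n : ℕ} {x : G ∗ Multiplicative ℤ} (h : Red s t n x) :
    (n = 1 ∧ s = t ∧ x = letter G s) ∨
      ∃ m u g y, n = m + 1 ∧ Red u t m y ∧ x = letter G s * inl g * y := by
  induction h with
  | single s => exact .inl ⟨rfl, rfl, rfl⟩
  | @append s t u v n m x y g h₁ h₂ hg ih₁ ih₂ =>
    right
    rcases ih₁ with ⟨rfl, rfl, rfl⟩ | ⟨m', u', g', y', rfl, hy', rfl⟩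
    · exact ⟨m, u, g, y, by omega, h₂, rfl⟩
    · exact ⟨m' + m, u', g', y' * inl g * y, by omega, .append g hy' h₂ hg, by
        simp only [mul_assoc]⟩

/-- `Len n v` says that `v` is the value of a reduced word with exactly `n` letters `b^{±1}`. -/
def Len (n : ℕ) (v : G ∗ Multiplicative ℤ) : Prop :=
  (n = 0 ∧ ∃ g : G, v = inl g) ∨
    ∃ (s t : ℤˣ) (h : G) (x : G ∗ Multiplicative ℤ) (k : G), Red s t n x ∧ v = inl h * x * inl k

/-! ### Uniqueness of the length -/

/-- The HNN extension of `G` along the trivial subgroup, a copy of `G ∗ ⟨b⟩`. -/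
abbrev HNN (G : Type*) [Group G] : Type _ :=
  HNNExtension G (⊥ : Subgroup G) (⊥ : Subgroup G) (MulEquiv.refl _)

/-- The comparison map sending `b` to the stable letter; its bijectivity plays no role. -/
noncomputable def toHNN (G : Type*) [Group G] : G ∗ Multiplicative ℤ →* HNN G :=
  lift HNNExtension.of (zpowersHom _ HNNExtension.t)

lemma toHNN_inl (g : G) : toHNN G (inl g) = HNNExtension.of g := by simp [toHNN]

lemma toHNN_letter (s : ℤˣ) : toHNN G (letter G s) = HNNExtension.t ^ (s : ℤ) := by
  simp [toHNN, letter]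

lemma Red.exists_list {s t : ℤˣ} {n : ℕ} {x : G ∗ Multiplicative ℤ} (h : Red s t n x) (k : G) :
    ∃ L : List (ℤˣ × G), L.length = n ∧ L.IsChain (fun a b => a.2 = 1 → a.1 = b.1) ∧
      (∀ a ∈ L.head?, a.1 = s) ∧ (∀ a ∈ L.getLast?, a = (t, k)) ∧
      (L.map (fun x => HNNExtension.t ^ (x.1 : ℤ) * HNNExtension.of x.2)).prod =
        toHNN G (x * inl k) := by
  induction h generalizing k with
  | single s => exact ⟨[(s, k)], by simp [toHNN_inl, toHNN_letter]⟩
  | @append s t u v n m x y g h₁ h₂ hg ih₁ ih₂ =>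
    obtain ⟨L₁, hl₁, hc₁, hh₁, ht₁, hp₁⟩ := ih₁ g
    obtain ⟨L₂, hl₂, hc₂, hh₂, ht₂, hp₂⟩ := ih₂ k
    have hn₁ : L₁ ≠ [] := by rintro rfl; have := h₁.pos; simp at hl₁; omega
    have hn₂ : L₂ ≠ [] := by rintro rfl; have := h₂.pos; simp at hl₂; omega
    refine ⟨L₁ ++ L₂, by simp [hl₁, hl₂], ?_, ?_, ?_, ?_⟩
    · refine List.isChain_append.2 ⟨hc₁, hc₂, ?_⟩
      intro a ha c hc h
      rw [ht₁ a ha] at h ⊢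
      rw [hh₂ c hc]
      exact hg h
    · rwa [List.head?_append_of_ne_nil _ hn₁]
    · rwa [List.getLast?_append_of_ne_nil _ hn₂]
    · rw [List.map_append, List.prod_append, hp₁, hp₂, ← map_mul]
      simp only [mul_assoc]

lemma Len.exists_reducedWord {n : ℕ} {v : G ∗ Multiplicative ℤ} (h : Len n v) :
    ∃ w : HNNExtension.NormalWord.ReducedWord G (⊥ : Subgroup G) (⊥ : Subgroup G),
      w.toList.length = n ∧ w.prod (MulEquiv.refl _) = toHNN G v := by
  rcases h with ⟨rfl, g, rfl⟩ | ⟨s, t, h, x, k, hx, rfl⟩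
  · exact ⟨⟨g, [], List.isChain_nil⟩, rfl, by
      simp [HNNExtension.NormalWord.ReducedWord.prod, toHNN_inl]⟩
  · obtain ⟨L, hl, hc, -, -, hp⟩ := hx.exists_list k
    have hc' : L.IsChain (fun a b =>
        a.2 ∈ HNNExtension.toSubgroup (⊥ : Subgroup G) (⊥ : Subgroup G) a.1 → a.1 = b.1) := by
      refine hc.imp fun a c hac ha => hac ?_
      rcases Int.units_eq_one_or a.1 with h | h <;> rw [h] at ha <;> simpa using ha
    refine ⟨⟨h, L, hc'⟩, hl, ?_⟩
    rw [HNNExtension.NormalWord.ReducedWord.prod, hp, mul_assoc, map_mul _ (inl h), toHNN_inl]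

lemma Len.unique {n m : ℕ} {v : G ∗ Multiplicative ℤ} (hn : Len n v) (hm : Len m v) : n = m := by
  obtain ⟨w₁, rfl, h₁⟩ := hn.exists_reducedWord
  obtain ⟨w₂, rfl, h₂⟩ := hm.exists_reducedWord
  have := (HNNExtension.ReducedWord.map_fst_eq_and_of_prod_eq _ (h₁.trans h₂.symm)).1
  simpa using congrArg List.length this

/-! ### Existence of reduced words -/

lemma exists_len_letter_mul (s : ℤˣ) {v : G ∗ Multiplicative ℤ} (hv : ∃ n, Len n v) :
    ∃ n, Len n (letter G s * v) := by
  obtain ⟨n, ⟨rfl, g, rfl⟩ | ⟨u, t, h, x, k, hx, rfl⟩⟩ := hv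
  · exact ⟨1, .inr ⟨s, s, 1, _, g, .single s, by simp⟩⟩
  · by_cases hh : h = 1 → s = u
    · exact ⟨1 + n, .inr ⟨s, t, 1, _, k, .append h (.single s) hx hh, by simp [mul_assoc]⟩⟩
    · push Not at hh
      obtain ⟨rfl, hsu⟩ := hh
      obtain rfl : u = -s := by
        rcases Int.units_eq_one_or s with rfl | rfl <;>
          rcases Int.units_eq_one_or u with rfl | rfl <;> simp_all
      rcases hx.peel_left with ⟨-, -, rfl⟩ | ⟨m, u, g, y, -, hy, rfl⟩
      · exact ⟨0, .inl ⟨rfl, k, by simp [letter_neg]⟩⟩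
      · exact ⟨m, .inr ⟨u, t, g, y, k, hy, by simp [letter_neg, mul_assoc]⟩⟩

lemma exists_len (v : G ∗ Multiplicative ℤ) : ∃ n, Len n v := by
  induction v using Monoid.Coprod.induction_on' with
  | one => exact ⟨0, .inl ⟨rfl, 1, by simp⟩⟩
  | inl_mul g v ih =>
    obtain ⟨n, ⟨rfl, g', rfl⟩ | ⟨u, t, h, x, k, hx, rfl⟩⟩ := ih
    · exact ⟨0, .inl ⟨rfl, g * g', by simp⟩⟩
    · exact ⟨n, .inr ⟨u, t, g * h, x, k, hx, by simp [mul_assoc]⟩⟩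
  | inr_mul z v ih =>
    obtain ⟨z, rfl⟩ := Multiplicative.ofAdd.surjective z
    induction z using Int.induction_on with
    | zero => simpa using ih
    | succ i hi =>
      have := exists_len_letter_mul 1 hi
      rwa [letter, ← mul_assoc, ← map_mul, ← ofAdd_add, Units.val_one, add_comm] at this
    | pred i hi =>
      have := exists_len_letter_mul (-1) hi
      rwa [letter, ← mul_assoc, ← map_mul, ← ofAdd_add, Units.val_neg, Units.val_one,
        add_comm, ← sub_eq_add_neg] at this

/-! ### Conjugates of elements of `G` -/

lemma exists_len_conj (q : G) (w : G ∗ Multiplicative ℤ) :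
    ∃ m r, Len m (w * inl q * w⁻¹) ∧ Len r (w * inl q * w⁻¹ * (w * inl q * w⁻¹)) ∧ r ≤ m := by
  have hsq : w * inl q * w⁻¹ * (w * inl q * w⁻¹) = w * inl (q * q) * w⁻¹ := by
    rw [map_mul]; group
  rw [hsq]
  obtain ⟨n, ⟨rfl, g, rfl⟩ | ⟨s, t, h, x, k, hx, rfl⟩⟩ := exists_len w
  · exact ⟨0, 0, .inl ⟨rfl, g * q * g⁻¹, by simp⟩, .inl ⟨rfl, g * (q * q) * g⁻¹, by simp⟩, le_rfl⟩
  · -- A nontrivial `c` gives the reduced word `h x (k c k⁻¹) x⁻¹ h⁻¹`.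
    have key : ∀ c : G, c ≠ 1 → Len (n + n) (inl h * x * inl k * inl c * (inl h * x * inl k)⁻¹) :=
      fun c hc => .inr ⟨s, -s, h, _, h⁻¹, .append (k * c * k⁻¹) hx hx.inv
        (fun h => absurd (by simpa using h) hc), by simp [mul_assoc]⟩
    have triv : ∀ c : G, c = 1 → Len 0 (inl h * x * inl k * inl c * (inl h * x * inl k)⁻¹) := by
      rintro _ rfl
      exact .inl ⟨rfl, 1, by simp⟩
    by_cases hq : q = 1
    · exact ⟨0, 0, triv _ hq, triv _ (by simp [hq]), le_rfl⟩
    · by_cases hq2 : q * q = 1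
      · exact ⟨_, 0, key _ hq, triv _ hq2, by omega⟩
      · exact ⟨_, _, key _ hq, key _ hq2, le_rfl⟩

/-- A cyclically reduced word containing `b` is not conjugate to an element of `G`; here the word
is `c x' d x⁻¹`, where `x` and `x'` have the same signs. -/
lemma not_conj {s t : ℤˣ} {n : ℕ} {x x' : G ∗ Multiplicative ℤ} (hx : Red s t n x)
    (hx' : Red s t n x') {c d : G} (hc : c ≠ 1) (hd : d ≠ 1) (q : G) (w : G ∗ Multiplicative ℤ) :
    inl c * x' * inl d * x⁻¹ ≠ w * inl q * w⁻¹ := by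
  intro h
  obtain ⟨m, r, hm, hr, hrm⟩ := exists_len_conj q w
  rw [← h] at hm hr
  have hy := Red.append d hx' hx.inv (fun h => absurd h hd)
  have h1 := hm.unique (.inr ⟨_, _, c, _, 1, hy, by simp [mul_assoc]⟩)
  have h2 := hr.unique (.inr ⟨_, _, c, _, 1, .append c hy hy (fun h => absurd h hc), by
    simp [mul_assoc]⟩)
  have := hx.pos
  omega

/-! ### The action of `ψ` and the descent -/

/-- The coefficient that `ψ` produces to the left of the letter `b ^ s`, since `ψ b = p b`. -/
def lc (p : G) (s : ℤˣ) : G := if s = 1 then p else 1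

/-- The coefficient that `ψ` produces to the right of the letter `b ^ s`, since
`ψ b⁻¹ = b⁻¹ p⁻¹`. -/
def rc (p : G) (s : ℤˣ) : G := if s = 1 then 1 else p⁻¹

lemma lc_cases (p : G) (s : ℤˣ) : lc p s = 1 ∨ lc p s = p := by
  unfold lc; split_ifs <;> simp

lemma rc_cases (p : G) (s : ℤˣ) : rc p s = 1 ∨ rc p s = p⁻¹ := by
  unfold rc; split_ifs <;> simp

section

variable {φ : G ≃* G} {p : G} {ψ : G ∗ Multiplicative ℤ ≃* G ∗ Multiplicative ℤ}

lemma map_letter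
    (hψb : ψ (inr (Multiplicative.ofAdd (1 : ℤ))) = inl p * inr (Multiplicative.ofAdd (1 : ℤ)))
    (s : ℤˣ) : ψ (letter G s) = inl (lc p s) * letter G s * inl (rc p s) := by
  have h1 : ψ (letter G 1) = inl p * letter G 1 := by simpa [letter] using hψb
  rcases Int.units_eq_one_or s with rfl | rfl
  · simpa [lc, rc] using h1
  · rw [letter_neg, map_inv, h1]
    simp [lc, rc]

lemma Red.map (hψG : ∀ g : G, ψ (inl g) = inl (φ g))
    (hψb : ψ (inr (Multiplicative.ofAdd (1 : ℤ))) = inl p * inr (Multiplicative.ofAdd (1 : ℤ)))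
    {s t : ℤˣ} {n : ℕ} {x : G ∗ Multiplicative ℤ} (h : Red s t n x) :
    ∃ x', Red s t n x' ∧ ψ x = inl (lc p s) * x' * inl (rc p t) := by
  induction h with
  | single s => exact ⟨_, .single s, map_letter hψb s⟩
  | @append s t u v n m x y g h₁ h₂ hg ih₁ ih₂ =>
    obtain ⟨x', hx', ex⟩ := ih₁
    obtain ⟨y', hy', ey⟩ := ih₂
    refine ⟨_, .append (rc p t * φ g * lc p u) hx' hy' ?_, ?_⟩
    · intro h
      -- For opposite signs the new coefficient is a conjugate of `φ g`.
      rcases Int.units_eq_one_or t with rfl | rfl <;>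
        rcases Int.units_eq_one_or u with rfl | rfl
      · rfl
      · exact hg (by simpa [lc, rc] using h)
      · refine hg ?_
        have h' : p⁻¹ * φ g * p = 1 := by simpa [lc, rc] using h
        have : φ g = 1 := by
          calc φ g = p * (p⁻¹ * φ g * p) * p⁻¹ := by group
            _ = 1 := by rw [h']; group
        simpa using this
      · rfl
    · rw [map_mul, map_mul, ex, ey, hψG]
      simp [mul_assoc]

lemma conj_cancel {q : G} {z : G ∗ Multiplicative ℤ} (a : G ∗ Multiplicative ℤ)
    (h : ∃ w, a * z * a⁻¹ = w * inl q * w⁻¹) : ∃ w, z = w * inl q * w⁻¹ := by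
  obtain ⟨w, hw⟩ := h
  refine ⟨a⁻¹ * w, ?_⟩
  calc z = a⁻¹ * (a * z * a⁻¹) * a := by group
    _ = _ := by rw [hw]; group

/-- Induction on the length of `v`: at each step a seam of the cyclic word `B * ψ v * A * v⁻¹`
cancels, which shortens `v` and changes one of the coefficients `A`, `B`. -/
lemma descent (hψG : ∀ g : G, ψ (inl g) = inl (φ g))
    (hψb : ψ (inr (Multiplicative.ofAdd (1 : ℤ))) = inl p * inr (Multiplicative.ofAdd (1 : ℤ)))
    (q : G) (n : ℕ) (v : G ∗ Multiplicative ℤ) (A B : G) (hv : Len n v)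
    (hA : A = 1 ∨ A = p) (hB : B = 1 ∨ B = p⁻¹)
    (hconj : ∃ w, inl B * ψ v * inl A * v⁻¹ = w * inl q * w⁻¹) :
    ∃ x y A B : G, (A = 1 ∨ A = p) ∧ (B = 1 ∨ B = p⁻¹) ∧ B * φ x * A * x⁻¹ = y * q * y⁻¹ := by
  induction n generalizing v A B with
  | zero =>
    rcases hv with ⟨-, g, rfl⟩ | ⟨s, t, h, x, k, hx, rfl⟩
    · obtain ⟨w, hw⟩ := hconj
      refine ⟨g, fst w, A, B, hA, hB, ?_⟩
      simpa [hψG] using congrArg fst hw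
    · exact absurd hx.pos (lt_irrefl 0)
  | succ n ih =>
    rcases hv with ⟨h0, -⟩ | ⟨s, t, h, x, k, hx, rfl⟩
    · omega
    by_cases hc : h⁻¹ * B * φ h * lc p s = 1
    · -- The cyclic seam cancels: the first letter `b ^ s` of `v` is removed.
      have hs : B * φ h * lc p s = h := by
        calc B * φ h * lc p s = h * (h⁻¹ * B * φ h * lc p s) := by group
          _ = h := by rw [hc, mul_one]
      obtain ⟨v', hv', e⟩ : ∃ v', Len n v' ∧ x * inl k = letter G s * v' := by
        rcases hx.peel_left with ⟨hn, -, rfl⟩ | ⟨m, u, g, y, hn, hy, rfl⟩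
        · obtain rfl : n = 0 := by omega
          exact ⟨inl k, .inl ⟨rfl, k, rfl⟩, rfl⟩
        · obtain rfl : n = m := by omega
          exact ⟨inl g * y * inl k, .inr ⟨_, _, _, _, _, hy, rfl⟩, by simp only [mul_assoc]⟩
      refine ih v' A (rc p s) hv' hA (rc_cases p s) (conj_cancel (inl h * letter G s) ?_)
      convert hconj using 3
      rw [mul_assoc (inl h) x, e, map_mul, map_mul, map_letter hψb, hψG]
      nth_rewrite 1 [← hs]
      simp [mul_assoc]
    · by_cases hd : rc p t * φ k * A * k⁻¹ = 1
      · -- The middle seam cancels: the last letter `b ^ t` of `v` is removed.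
        obtain ⟨v', hv', e⟩ : ∃ v', Len n v' ∧ inl h * x = v' * letter G t := by
          rcases hx.inv.peel_left with ⟨hn, -, hxi⟩ | ⟨m, u, g, y, hn, hy, hxi⟩
          · obtain rfl : n = 0 := by omega
            exact ⟨inl h, .inl ⟨rfl, h, rfl⟩, by rw [← inv_inv x, hxi, letter_neg, inv_inv]⟩
          · obtain rfl : n = m := by omega
            refine ⟨inl h * y⁻¹ * inl g⁻¹, .inr ⟨_, _, _, _, _, hy.inv, rfl⟩, ?_⟩
            rw [← inv_inv x, hxi, letter_neg]
            simp [mul_assoc]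
        refine ih v' (lc p t) B hv' (lc_cases p t) hB ?_
        convert hconj using 3
        have hd' : (inl (rc p t) * inl (φ k) * inl A * (inl k)⁻¹ : G ∗ Multiplicative ℤ) = 1 := by
          rw [← map_inv, ← map_mul, ← map_mul, ← map_mul, hd, map_one]
        rw [e, map_mul, map_mul, map_letter hψb, hψG]
        calc inl B * ψ v' * inl (lc p t) * v'⁻¹
            = inl B * ψ v' * inl (lc p t) * letter G t * 1 * (letter G t)⁻¹ * v'⁻¹ := by group
          _ = _ := by rw [← hd']; simp only [mul_inv_rev, mul_assoc]
      · exfalso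
        obtain ⟨x', hx', ex⟩ := hx.map hψG hψb
        obtain ⟨w, hw⟩ : ∃ w, inl (h⁻¹ * B * φ h * lc p s) * x' * inl (rc p t * φ k * A * k⁻¹) * x⁻¹
            = w * inl q * w⁻¹ := by
          refine conj_cancel (inl h) ?_
          convert hconj using 3
          rw [map_mul ψ, map_mul ψ, hψG, hψG, ex]
          simp [mul_assoc]
        exact not_conj hx hx' hc hd q w hw

end

end FreeProductZ



/-- `G ∗ Multiplicative ℤ` is the free product of `G` with an infinite cyclic group
generated by `b = Multiplicative.ofAdd 1`. Given an automorphism `φ` of `G` and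
`p ∈ G`, the automorphism `ψ` of the free product with `ψ|_G = φ` and `ψ(b) = p·b`
is unique, so we quantify over all automorphisms `ψ` satisfying these conditions. -/
theorem twisted_conjugacy_free_product_iff (G : Type*) [Group G]
    (φ : G ≃* G) (p q : G)
    (ψ : G ∗ Multiplicative ℤ ≃* G ∗ Multiplicative ℤ)
    (hψG : ∀ g : G, ψ (Monoid.Coprod.inl g) = Monoid.Coprod.inl (φ g))
    (hψb : ψ (Monoid.Coprod.inr (Multiplicative.ofAdd (1 : ℤ))) =
      Monoid.Coprod.inl p * Monoid.Coprod.inr (Multiplicative.ofAdd (1 : ℤ))) :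
    (∃ v w : G ∗ Multiplicative ℤ,
        ψ v * v⁻¹ = w * Monoid.Coprod.inl q * w⁻¹) ↔
      (∃ x y : G,
        φ x * x⁻¹ = y * q * y⁻¹ ∨ φ x * p * x⁻¹ = y * q * y⁻¹ ∨
        p⁻¹ * φ x * x⁻¹ = y * q * y⁻¹ ∨ p⁻¹ * φ x * p * x⁻¹ = y * q * y⁻¹) := by
  open FreeProductZ Monoid.Coprod in
  constructor
  · rintro ⟨v, w, h⟩
    obtain ⟨n, hn⟩ := exists_len v
    obtain ⟨x, y, A, B, hA, hB, e⟩ := descent hψG hψb q n v 1 1 hn (.inl rfl) (.inl rfl)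
      ⟨w, by simpa using h⟩
    refine ⟨x, y, ?_⟩
    rcases hA with rfl | rfl <;> rcases hB with rfl | rfl
    · exact .inl (by simpa using e)
    · exact .inr (.inr (.inl (by simpa using e)))
    · exact .inr (.inl (by simpa using e))
    · exact .inr (.inr (.inr e))
  · rintro ⟨x, y, h⟩
    have hm := fun {a c : G} (e : a = c) => congrArg (inl : G →* G ∗ Multiplicative ℤ) e
    -- The witnesses for `v` are `x`, `x b`, `b⁻¹ x` and `b⁻¹ x b`.
    set b : G ∗ Multiplicative ℤ := inr (Multiplicative.ofAdd (1 : ℤ)) with hb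
    rcases h with h | h | h | h <;> replace h := hm h <;> simp only [map_mul, map_inv] at h
    · exact ⟨inl x, inl y, by rw [hψG, h]⟩
    · refine ⟨inl x * b, inl y, ?_⟩
      rw [← h, map_mul, hψG, hψb]
      group
    · refine ⟨b⁻¹ * inl x, b⁻¹ * inl y, ?_⟩
      trans b⁻¹ * (inl y * inl q * (inl y)⁻¹) * b
      · rw [← h, map_mul, map_inv, hψG, hψb]
        group
      · group
    · refine ⟨b⁻¹ * inl x * b, b⁻¹ * inl y, ?_⟩
      trans b⁻¹ * (inl y * inl q * (inl y)⁻¹) * b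
      · rw [← h, map_mul, map_mul, map_inv, hψG, hψb]
        group
      · group
end
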